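/- Suppose M is contractive with contraction rate 0 < a < 1 and uniformly continuous with b < ∞. Then E(M) ⊆ Φ(P(M)) ⊆ Ẽ(M), and F(Φ(μ)) = μ for every invariant measure μ ∈ P(M). -/

import Mathlib

open MeasureTheory Filter Topology
open scoped ENNReal NNReal Classical

noncomputable section

/-- A countable Markov system `(K_{i(e)}, w_e, p_e)_{e ∈ E}` on a metric space `K`:
a partition `(K_j)_{j ∈ N}` of `K` into nonempty Borel sets, source and target maps
`i, t : E → N` (`i` surjective), and for each `e ∈ E` Borel maps `w_e` and probability
functions `p_e` (extended by zero outside `K_{i(e)}`) with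
`∑_{e, i(e)=j} p_e(y) = 1` for `y ∈ K_j`. -/
structure MarkovSystem (K : Type*) [MetricSpace K] [MeasurableSpace K]
    (N : Type*) (E : Type*) where
  Kset : N → Set K
  Kset_nonempty : ∀ j, (Kset j).Nonempty
  Kset_measurable : ∀ j, MeasurableSet (Kset j)
  Kset_disjoint : Pairwise (Function.onFun Disjoint Kset)
  Kset_cover : (⋃ j, Kset j) = Set.univ
  i : E → N
  t : E → N
  i_surj : Function.Surjective i
  w : E → K → K
  p : E → K → ℝ
  w_measurable : ∀ e, Measurable (w e)
  p_measurable : ∀ e, Measurable (p e)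
  p_nonneg : ∀ e x, 0 ≤ p e x
  p_le_one : ∀ e x, p e x ≤ 1
  p_zero_outside : ∀ e x, x ∉ Kset (i e) → p e x = 0
  w_mapsTo : ∀ e, Set.MapsTo (w e) (Kset (i e)) (Kset (t e))
  p_pos_somewhere : ∀ e, ∃ x ∈ Kset (i e), 0 < p e x
  p_tsum_one : ∀ j, ∀ x ∈ Kset j, (∑' e : {e : E // i e = j}, p e.val x) = 1

/-- `Ē = E ∪ {∞}` (one-point compactification); with `E` countable its Borel σ-algebra
consists of all subsets. -/
instance optionMeasurableSpace (E : Type*) : MeasurableSpace (Option E) := ⊤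

/-- The code space `Σ̄ = Ē^ℤ`, carrying the product σ-algebra. -/
abbrev CodeSpace (E : Type*) : Type _ := ℤ → Option E

/-- The left shift `S` on the code space, `(Sσ)_{k-1} = σ_k`. -/
def shiftMap (E : Type*) : CodeSpace E → CodeSpace E := fun σ k => σ (k + 1)

/-- The cylinder set `_m[es₀, …, es_{n}] = {σ : σ_{m+k} = es_k}`. -/
def cylSetL {E : Type*} (m : ℤ) (es : List (Option E)) : Set (CodeSpace E) :=
  {σ | ∀ (k : ℕ) (h : k < es.length), σ (m + (k : ℤ)) = es.get ⟨k, h⟩}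

/-- The σ-algebra `𝓕` generated by the cylinder sets `_m[e_m, …, e_0]`, `m ≤ 0`. -/
def pastAlgebra (E : Type*) : MeasurableSpace (CodeSpace E) :=
  MeasurableSpace.generateFrom
    {A | ∃ es : List (Option E), es ≠ [] ∧ A = cylSetL (1 - (es.length : ℤ)) es}

/-- The conditional entropy `h_S(Λ) = H_Λ((_1[e])_{e ∈ Ē} | 𝓕)`. -/
def entropyS {E : Type*} (Λ : Measure (CodeSpace E)) : ℝ≥0∞ :=
  ∑' eo : Option E,
    ∫⁻ σ, ENNReal.ofReal
        (Real.negMulLog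
          ((Λ[Set.indicator {τ : CodeSpace E | τ 1 = eo} (fun _ => (1 : ℝ)) | pastAlgebra E]) σ)) ∂Λ

namespace MarkovSystem

variable {K : Type*} [MetricSpace K] [MeasurableSpace K] {N E : Type*}

/-- The Markov operator `Uf = ∑_e p_e · (f ∘ w_e)` acting on nonnegative Borel functions. -/
def markovOp (M : MarkovSystem K N E) (f : K → ℝ≥0∞) : K → ℝ≥0∞ :=
  fun x => ∑' e : E, ENNReal.ofReal (M.p e x) * f (M.w e x)

/-- The adjoint operator `U*` acting on measures, `(U*ν)(B) = ∫ U(1_B) dν`. -/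
def adjOp (M : MarkovSystem K N E) (ν : Measure K) : Measure K :=
  Measure.sum fun e : E =>
    Measure.map (M.w e) (ν.withDensity fun x => ENNReal.ofReal (M.p e x))

/-- `μ ∈ P(M)`: `μ` is an invariant Borel probability measure, `U*μ = μ`. -/
def IsInvariantMeasure (M : MarkovSystem K N E) (μ : Measure K) : Prop :=
  IsProbabilityMeasure μ ∧ M.adjOp μ = μ

/-- The path space `Σ_G`: all coordinates lie in `E` and `i(σ_{n+1}) = t(σ_n)`. -/
def pathSpace (M : MarkovSystem K N E) : Set (CodeSpace E) :=
  {σ | ∀ n : ℤ, ∃ e e' : E, σ n = some e ∧ σ (n + 1) = some e' ∧ M.i e' = M.t e}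

/-- `T_j = {σ ∈ Σ_G : t(σ_0) = j}`. -/
def Tset (M : MarkovSystem K N E) (j : N) : Set (CodeSpace E) :=
  {σ | σ ∈ M.pathSpace ∧ ∃ e : E, σ 0 = some e ∧ M.t e = j}

/-- `w` extended to `Ē`, with `w_∞ = id`. -/
def wext (M : MarkovSystem K N E) : Option E → K → K := fun o => o.elim id M.w

/-- `p` extended to `Ē`, with `p_∞ = 0`. -/
def pext (M : MarkovSystem K N E) : Option E → K → ℝ := fun o => o.elim (fun _ => 0) M.p

/-- `i` extended to `Ē`, with `i(∞) = j₀`. -/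
def iext (M : MarkovSystem K N E) (j0 : N) : Option E → N := fun o => o.elim j0 M.i

/-- `t` extended to `Ē`, with `t(∞) = j₀`. -/
def text (M : MarkovSystem K N E) (j0 : N) : Option E → N := fun o => o.elim j0 M.t

/-- `iterW M σ n y = w_{σ_0} ∘ w_{σ_{-1}} ∘ ⋯ ∘ w_{σ_{-n}} (y)`. -/
def iterW (M : MarkovSystem K N E) (σ : CodeSpace E) : ℕ → K → K
  | 0, y => M.wext (σ 0) y
  | n + 1, y => M.iterW σ n (M.wext (σ (-(n + 1 : ℤ))) y)

/-- `orbit M j0 xp σ n = w_{σ_0} ∘ ⋯ ∘ w_{σ_{-n}} (x_{i(σ_{-n})})`. -/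
def orbit (M : MarkovSystem K N E) (j0 : N) (xp : N → K) (σ : CodeSpace E) (n : ℕ) : K :=
  M.iterW σ n (xp (M.iext j0 (σ (-(n : ℤ)))))

/-- `D`: the set of `σ ∈ Σ_G` for which `lim_{m → -∞} w_{σ_0} ∘ ⋯ ∘ w_{σ_m}(x_{i(σ_m)})` exists. -/
def codeDomain (M : MarkovSystem K N E) (j0 : N) (xp : N → K) : Set (CodeSpace E) :=
  {σ | σ ∈ M.pathSpace ∧ ∃ l : K, Tendsto (fun n : ℕ => M.orbit j0 xp σ n) atTop (𝓝 l)}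

/-- The coding map `F`: the above limit on `D`, and `x_{t(σ_0)}` elsewhere. -/
def code (M : MarkovSystem K N E) (j0 : N) (xp : N → K) (σ : CodeSpace E) : K :=
  if h : σ ∈ M.codeDomain j0 xp then h.2.choose else xp (M.text j0 (σ 0))

/-- `Λ ∈ E(M)`: `Λ` is a shift-invariant Borel probability measure with `Λ(D) = 1` and
`E_Λ(1_{_1[e]} | 𝓕) = p_e ∘ F` `Λ`-a.e. for every `e ∈ E` (an equilibrium state). -/
def IsEquilibrium (M : MarkovSystem K N E) (j0 : N) (xp : N → K)
    (Λ : Measure (CodeSpace E)) : Prop :=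
  IsProbabilityMeasure Λ ∧ Measure.map (shiftMap E) Λ = Λ ∧
    Λ (M.codeDomain j0 xp) = 1 ∧
    ∀ e : E,
      (Λ[Set.indicator {σ : CodeSpace E | σ 1 = some e} (fun _ => (1 : ℝ)) | pastAlgebra E])
        =ᵐ[Λ] fun σ => M.p e (M.code j0 xp σ)

/-- `pbar` is the family of continuous extensions `p̄_e` of `p_e|_{K_{i(e)}}` to the closure
of `K_{i(e)}`, extended further by zero on `K`. -/
def IsUCExtensionP (M : MarkovSystem K N E) (pbar : E → K → ℝ) : Prop :=
  ∀ e : E, ContinuousOn (pbar e) (closure (M.Kset (M.i e))) ∧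
    (∀ x ∈ M.Kset (M.i e), pbar e x = M.p e x) ∧
    (∀ x, x ∉ closure (M.Kset (M.i e)) → pbar e x = 0)

/-- `wb` is a family of continuous extensions `w̄_e` of `w_e|_{K_{i(e)}}` to the closure
of `K_{i(e)}`. -/
def IsUCExtensionW (M : MarkovSystem K N E) (wb : E → K → K) : Prop :=
  ∀ e : E, ContinuousOn (wb e) (closure (M.Kset (M.i e))) ∧
    (∀ x ∈ M.Kset (M.i e), wb e x = M.w e x)

/-- The Markov system is uniformly continuous: each `w_e|_{K_{i(e)}}` and `p_e|_{K_{i(e)}}`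
is uniformly continuous. -/
def IsUniformlyContinuous (M : MarkovSystem K N E) : Prop :=
  ∀ e : E, UniformContinuousOn (M.w e) (M.Kset (M.i e)) ∧
    UniformContinuousOn (M.p e) (M.Kset (M.i e))

/-- `∂p_e = p̄_e · 1_{cl(K_{i(e)}) \ K_{i(e)}}`. -/
def dp (M : MarkovSystem K N E) (pbar : E → K → ℝ) (e : E) : K → ℝ :=
  Set.indicator (closure (M.Kset (M.i e)) \ M.Kset (M.i e)) (pbar e)

/-- `Λ ∈ Ẽ(M)` (asymptotic state): shift-invariant probability with `Λ(D) = 1` and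
`E_Λ(1_{_1[e]} | 𝓕) = (p̄_e ∘ F)·1_{T_{i(e)}}` `Λ`-a.e. for every `e`. -/
def IsAsymptotic (M : MarkovSystem K N E) (j0 : N) (xp : N → K) (pbar : E → K → ℝ)
    (Λ : Measure (CodeSpace E)) : Prop :=
  IsProbabilityMeasure Λ ∧ Measure.map (shiftMap E) Λ = Λ ∧
    Λ (M.codeDomain j0 xp) = 1 ∧
    ∀ e : E,
      (Λ[Set.indicator {σ : CodeSpace E | σ 1 = some e} (fun _ => (1 : ℝ)) | pastAlgebra E])
        =ᵐ[Λ] Set.indicator (M.Tset (M.i e)) (fun σ => pbar e (M.code j0 xp σ))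

/-- `Λ ∈ E_⊥(M)`: shift-invariant probability with `Λ(D) = 1` and
`E_Λ(1_{_1[e]} | 𝓕) = (∂p_e ∘ F)·1_{T_{i(e)}}` `Λ`-a.e. for every `e`. -/
def IsPerp (M : MarkovSystem K N E) (j0 : N) (xp : N → K) (pbar : E → K → ℝ)
    (Λ : Measure (CodeSpace E)) : Prop :=
  IsProbabilityMeasure Λ ∧ Measure.map (shiftMap E) Λ = Λ ∧
    Λ (M.codeDomain j0 xp) = 1 ∧
    ∀ e : E,
      (Λ[Set.indicator {σ : CodeSpace E | σ 1 = some e} (fun _ => (1 : ℝ)) | pastAlgebra E])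
        =ᵐ[Λ] Set.indicator (M.Tset (M.i e)) (fun σ => M.dp pbar e (M.code j0 xp σ))

/-- `G = ⋃_{k ≥ 0} ⋃_{j ∈ N} S^{-k}(F^{-1}(K_j) ∩ T_j)`. -/
def Gset (M : MarkovSystem K N E) (j0 : N) (xp : N → K) : Set (CodeSpace E) :=
  ⋃ (k : ℕ) (j : N), (shiftMap E)^[k] ⁻¹' ((M.code j0 xp) ⁻¹' (M.Kset j) ∩ M.Tset j)

/-- `M` is non-degenerate: for every asymptotic state `Λ` there is `i ∈ N` with
`Λ(T_i ∩ F^{-1}(K_i)) > 0`. -/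
def IsNonDegenerate (M : MarkovSystem K N E) (j0 : N) (xp : N → K) (pbar : E → K → ℝ) : Prop :=
  ∀ Λ : Measure (CodeSpace E), M.IsAsymptotic j0 xp pbar Λ →
    ∃ i : N, 0 < Λ (M.Tset i ∩ (M.code j0 xp) ⁻¹' (M.Kset i))

/-- `M` is consistent: `F(Λ) ∈ P(M)` for every asymptotic state `Λ`. -/
def IsConsistent (M : MarkovSystem K N E) (j0 : N) (xp : N → K) (pbar : E → K → ℝ) : Prop :=
  ∀ Λ : Measure (CodeSpace E), M.IsAsymptotic j0 xp pbar Λ →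
    M.IsInvariantMeasure (Measure.map (M.code j0 xp) Λ)

/-- `Rf = ∑_e ∂p_e · (f ∘ w̄_e)`. -/
def Rop (M : MarkovSystem K N E) (pbar : E → K → ℝ) (wb : E → K → K)
    (f : K → ℝ≥0∞) : K → ℝ≥0∞ :=
  fun x => ∑' e : E, ENNReal.ofReal (M.dp pbar e x) * f (wb e x)

/-- `Ω = ⋂_{n ≥ 1} {R^n 1 ≥ 1}`. -/
def OmegaSet (M : MarkovSystem K N E) (pbar : E → K → ℝ) (wb : E → K → K) : Set K :=
  ⋂ n : ℕ, {x : K | 1 ≤ (M.Rop pbar wb)^[n + 1] (fun _ => 1) x}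

/-- `ξ_j = ∑_{e, i(e) = j} sup_{x ∈ K_j} p_e(x)`. -/
def xi (M : MarkovSystem K N E) (j : N) : ℝ≥0∞ :=
  ∑' e : {e : E // M.i e = j}, ⨆ x ∈ M.Kset j, ENNReal.ofReal (M.p e.val x)

/-- `M` has a dominating Markov chain: `ξ_j < ∞` for all `j ∈ N`. -/
def HasDominatingChain (M : MarkovSystem K N E) : Prop := ∀ j : N, M.xi j ≠ ⊤

/-- `ξ_j · q_{j j'} = ∑_{e, i(e) = j, t(e) = j'} sup_{x ∈ K_j} p_e(x)`. -/
def xiq (M : MarkovSystem K N E) (j j' : N) : ℝ≥0∞ :=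
  ∑' e : {e : E // M.i e = j ∧ M.t e = j'}, ⨆ x ∈ M.Kset j, ENNReal.ofReal (M.p e.val x)

/-- `c = ∑_{j'} sup_j ξ_j q_{j j'}`. -/
def cConst (M : MarkovSystem K N E) : ℝ≥0∞ := ∑' j' : N, ⨆ j : N, M.xiq j j'

/-- `α^{x_0}_n({j}) = (1/n) ∑_{k=1}^n ((U*)^k δ_{x_0})(K_j)`. -/
def alphaMeas (M : MarkovSystem K N E) (x0 : K) (n : ℕ) (j : N) : ℝ≥0∞ :=
  (n : ℝ≥0∞)⁻¹ * ∑ k ∈ Finset.range n, (M.adjOp^[k + 1] (Measure.dirac x0)) (M.Kset j)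

/-- Condition (T) at `x_0`: the sequence `(α^{x_0}_n)_n` is uniformly tight. -/
def ConditionT (M : MarkovSystem K N E) (x0 : K) : Prop :=
  ∀ ε : ℝ, 0 < ε → ∃ V : Finset N,
    ∀ n : ℕ, (∑' j : {j : N // j ∉ V}, M.alphaMeas x0 (n + 1) j.val) < ENNReal.ofReal ε

/-- `M` is contractive with contraction rate `a`:
`∑_{e, i(e) = j} p_e(x) d(w_e x, w_e y) ≤ a·d(x, y)` on each `K_j`. -/
def IsContractive (M : MarkovSystem K N E) (a : ℝ) : Prop :=
  ∀ j : N, ∀ x ∈ M.Kset j, ∀ y ∈ M.Kset j,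
    (∑' e : {e : E // M.i e = j},
        ENNReal.ofReal (M.p e.val x * dist (M.w e.val x) (M.w e.val y)))
      ≤ ENNReal.ofReal (a * dist x y)

/-- `L(x) = ∑_j d(x, x_j)·1_{K_j}(x)`. -/
def Lfun (M : MarkovSystem K N E) (xp : N → K) : K → ℝ≥0∞ :=
  fun x => ∑' j : N, Set.indicator (M.Kset j) (fun y => ENNReal.ofReal (dist y (xp j))) x

/-- `b = sup_j sup_{x ∈ K_j} ∑_{e, i(e) = j} p_e(x)·d(w_e(x_{i(e)}), x_{t(e)})`. -/
def bConst (M : MarkovSystem K N E) (xp : N → K) : ℝ≥0∞ :=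
  ⨆ j : N, ⨆ x ∈ M.Kset j,
    ∑' e : {e : E // M.i e = j},
      ENNReal.ofReal (M.p e.val x * dist (M.w e.val (xp (M.i e.val))) (xp (M.t e.val)))

/-- `P^m_x` evaluated on a word: `p_{e_0}(x)·p_{e_1}(w_{e_0}x)·⋯`. -/
def wordProb (M : MarkovSystem K N E) : List (Option E) → K → ℝ
  | [], _ => 1
  | o :: rest, x => M.pext o x * M.wordProb rest (M.wext o x)

/-- `Λ = Φ(μ)`: `Λ` is a shift-invariant Borel probability measure with
`Λ(_m[e_m, …, e_n]) = ∫ P^m_x(_m[e_m, …, e_n]) dμ(x)` for all cylinders with `m ≤ 0`. -/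
def IsPhiOf (M : MarkovSystem K N E) (μ : Measure K) (Λ : Measure (CodeSpace E)) : Prop :=
  IsProbabilityMeasure Λ ∧ Measure.map (shiftMap E) Λ = Λ ∧
    ∀ m : ℤ, m ≤ 0 → ∀ es : List (Option E),
      Λ (cylSetL m es) = ∫⁻ x, ENNReal.ofReal (M.wordProb es x) ∂μ

/-- The (negative of the) energy function: `-u(σ) = -log p_{σ_1}(F(σ))` on `D`
(`+∞` if `p_{σ_1}(F(σ)) = 0`) and `+∞` off `D`, valued in `[0, ∞]`. -/
def negEnergy (M : MarkovSystem K N E) (j0 : N) (xp : N → K) (σ : CodeSpace E) : ℝ≥0∞ :=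
  if σ ∈ M.codeDomain j0 xp then
    (σ 1).elim ⊤ fun e =>
      if M.p e (M.code j0 xp σ) = 0 then ⊤
      else ENNReal.ofReal (-Real.log (M.p e (M.code j0 xp σ)))
  else ⊤

/-- The free energy `h_S(Λ) + ∫ u dΛ`, as an extended real number. -/
def freeEnergy (M : MarkovSystem K N E) (j0 : N) (xp : N → K)
    (Λ : Measure (CodeSpace E)) : EReal :=
  (entropyS Λ : EReal) - ((∫⁻ σ, M.negEnergy j0 xp σ ∂Λ : ℝ≥0∞) : EReal)

/-- `Λ₀ ∈ E(u)`: `Λ₀` is a thermodynamic equilibrium state for the energy function `u`. -/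
def IsEquilibriumForU (M : MarkovSystem K N E) (j0 : N) (xp : N → K)
    (Λ0 : Measure (CodeSpace E)) : Prop :=
  IsProbabilityMeasure Λ0 ∧ Measure.map (shiftMap E) Λ0 = Λ0 ∧ entropyS Λ0 ≠ ⊤ ∧
    M.freeEnergy j0 xp Λ0 =
      sSup {r : EReal | ∃ Λ : Measure (CodeSpace E),
        IsProbabilityMeasure Λ ∧ Measure.map (shiftMap E) Λ = Λ ∧ entropyS Λ ≠ ⊤ ∧
          r = M.freeEnergy j0 xp Λ}

end MarkovSystem

end


variable {K : Type*} [MetricSpace K] [CompleteSpace K] [MeasurableSpace K] [BorelSpace K]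
  {N E : Type*} [Countable N] [Countable E]

/-!
The mediating notion is `HasCodingLaw`: on every cylinder of the past, the coding map `F` has under
`Λ` the law of the state that the Markov process started from `μ` reaches along the word of the
cylinder.

If `Λ = Φ(μ)`, the orbit `w_{σ_0} ∘ ⋯ ∘ w_{σ_{-n}} (x_{i(σ_{-n})})` and the true state were at
distance `L` when the letter `σ_{-n}` was read, and the contraction brings them on average within
`a ^ (n + 1) ∫ L dμ` of each other. This is finite because the drift inequality `U L ≤ a L + b`
bounds `∫ L dμ` by `b / (1 - a)`. Hence the orbits converge almost surely, and testing against
Lipschitz functions identifies the law of the limit.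

Given the coding law, shift invariance turns appending one letter into a conditional probability,
which gives the equilibrium equation. Conversely, an equilibrium state satisfies
`F ∘ S = w_{σ_1} ∘ F` almost surely, because `p_e` vanishes off `K_{i(e)}` and `w_e` is continuous
on it, and the coding law of `F(Λ)` follows by induction on the word. So `E(M) = Φ(P(M))`. Finally, on
an equilibrium state `F` lies in `K_{i(σ_1)} = K_{t(σ_0)}` almost surely, so that
`(p̄_e ∘ F) · 1_{T_{i(e)}} = p_e ∘ F`.
-/

lemma ext_of_forall_lintegral_lipschitzWith_eq {X : Type*} [PseudoEMetricSpace X]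
    [MeasurableSpace X] [BorelSpace X] {μ ν : Measure X} [IsFiniteMeasure μ] [IsFiniteMeasure ν]
    (h : ∀ (f : X → ℝ≥0) (C : ℝ≥0), LipschitzWith C f → (∀ x, f x ≤ 1) →
      ∫⁻ x, f x ∂μ = ∫⁻ x, f x ∂ν) : μ = ν := by
  have hclosed : ∀ s, IsClosed s → μ s = ν s := fun s hs => by
    have hδ : ∀ n : ℕ, (0 : ℝ) < 1 / (n + 1) := fun n => Nat.one_div_pos_of_nat
    have hlim (κ : Measure X) [IsFiniteMeasure κ] :=
      tendsto_lintegral_thickenedIndicator_of_isClosed κ hs hδ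
        tendsto_one_div_add_atTop_nhds_zero_nat
    refine tendsto_nhds_unique (hlim μ) ((hlim ν).congr fun n => ?_)
    exact (h _ _ (lipschitzWith_thickenedIndicator (hδ n) s)
      (thickenedIndicator_le_one (hδ n) s)).symm
  exact ext_of_generate_finite _ (BorelSpace.measurable_eq.trans borel_eq_generateFrom_isClosed)
    isPiSystem_isClosed hclosed (hclosed _ isClosed_univ)

section Lipschitz

variable {X : Type*} [PseudoEMetricSpace X] {f : X → ℝ≥0} {C : ℝ≥0}

lemma coe_le_coe_add_mul_edist_of_lipschitzWith (hf : LipschitzWith C f) (x y : X) :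
    (f x : ℝ≥0∞) ≤ f y + C * edist x y := by
  refine le_trans ?_ (add_le_add_right (hf x y) _)
  rw [edist_nndist]
  exact_mod_cast NNReal.le_add_nndist (f x) (f y)

variable [MeasurableSpace X]

lemma lintegral_le_mul_measure_univ_add_of_lipschitzWith (hf : LipschitzWith C f) (ν : Measure X)
    (z : X) : ∫⁻ x, f x ∂ν ≤ f z * ν Set.univ + C * ∫⁻ x, edist x z ∂ν := by
  rw [← lintegral_const_mul' _ _ ENNReal.coe_ne_top, ← lintegral_const,
    ← lintegral_add_left measurable_const]
  exact lintegral_mono fun x => coe_le_coe_add_mul_edist_of_lipschitzWith hf x z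

lemma mul_measure_univ_le_lintegral_add_of_lipschitzWith [OpensMeasurableSpace X]
    (hf : LipschitzWith C f) (ν : Measure X) (z : X) :
    f z * ν Set.univ ≤ ∫⁻ x, f x ∂ν + C * ∫⁻ x, edist x z ∂ν := by
  rw [← lintegral_const_mul' _ _ ENNReal.coe_ne_top, ← lintegral_const,
    ← lintegral_add_left hf.continuous.measurable.coe_nnreal_ennreal]
  refine lintegral_mono fun x => ?_
  rw [edist_comm x z]
  exact coe_le_coe_add_mul_edist_of_lipschitzWith hf z x

end Lipschitz

section Drift

variable {X : Type*} [MeasurableSpace X] {μ : Measure X} [IsFiniteMeasure μ] {V : X → ℝ≥0∞}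
  {r b : ℝ≥0∞}

lemma setLIntegral_le_of_lintegral_min_le (hV : Measurable V) (hr : r < 1) (n : ℕ)
    (h : ∫⁻ x, min (V x) n ∂μ ≤ ∫⁻ x, min (r * V x + b) n ∂μ) :
    ∫⁻ x in {x | V x ≤ n}, V x ∂μ ≤ b * μ Set.univ / (1 - r) := by
  set A := {x | V x ≤ n}
  have hA : MeasurableSet A := measurableSet_le hV measurable_const
  have hfin : ∫⁻ x in A, V x ∂μ ≠ ⊤ :=
    ne_top_of_le_ne_top (by simp [ENNReal.mul_eq_top])
      (setLIntegral_mono (g := fun _ => (n : ℝ≥0∞)) measurable_const fun x (hx : V x ≤ n) => hx)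
  -- Off `A` the truncations contribute at most the finite amount `n * μ Aᶜ`, which cancels.
  have hdrift : ∫⁻ x in A, V x ∂μ ≤ r * ∫⁻ x in A, V x ∂μ + b * μ Set.univ := by
    have hcompl : ∫⁻ _ in Aᶜ, (n : ℝ≥0∞) ∂μ ≠ ⊤ := by simp [ENNReal.mul_eq_top]
    refine (ENNReal.add_le_add_iff_right hcompl).1 ?_
    calc ∫⁻ x in A, V x ∂μ + ∫⁻ _ in Aᶜ, (n : ℝ≥0∞) ∂μ
        = ∫⁻ x in A, min (V x) n ∂μ + ∫⁻ x in Aᶜ, min (V x) n ∂μ := by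
          congr 1
          · exact setLIntegral_congr_fun hA fun x hx => (min_eq_left hx).symm
          · exact setLIntegral_congr_fun hA.compl fun x (hx : ¬ V x ≤ n) =>
              (min_eq_right (le_of_not_ge hx)).symm
      _ ≤ ∫⁻ x in A, min (r * V x + b) n ∂μ + ∫⁻ x in Aᶜ, min (r * V x + b) n ∂μ := by
          rwa [lintegral_add_compl _ hA, lintegral_add_compl _ hA]
      _ ≤ ∫⁻ x in A, (r * V x + b) ∂μ + ∫⁻ _ in Aᶜ, (n : ℝ≥0∞) ∂μ :=
          add_le_add (lintegral_mono fun x => min_le_left _ _)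
            (lintegral_mono fun x => min_le_right _ _)
      _ ≤ r * ∫⁻ x in A, V x ∂μ + b * μ Set.univ + ∫⁻ _ in Aᶜ, (n : ℝ≥0∞) ∂μ := by
          rw [lintegral_add_right _ measurable_const, lintegral_const_mul _ hV, setLIntegral_const]
          gcongr
          exact Set.subset_univ A
  rwa [ENNReal.le_div_iff_mul_le (.inl (tsub_pos_of_lt hr).ne') (.inl (by simp)), mul_comm,
    ENNReal.sub_mul fun _ _ => hfin, one_mul, tsub_le_iff_left]

lemma lintegral_le_of_forall_lintegral_min_le (hV : Measurable V) (hV_top : ∀ x, V x ≠ ⊤)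
    (hr : r < 1) (h : ∀ n : ℕ, ∫⁻ x, min (V x) n ∂μ ≤ ∫⁻ x, min (r * V x + b) n ∂μ) :
    ∫⁻ x, V x ∂μ ≤ b * μ Set.univ / (1 - r) := by
  have hmono : Monotone fun n : ℕ => {x | V x ≤ n} := fun m n hmn x (hx : V x ≤ m) =>
    hx.trans (by exact_mod_cast hmn)
  have hunion : ⋃ n : ℕ, {x | V x ≤ n} = Set.univ := Set.eq_univ_of_forall fun x =>
    let ⟨n, hn⟩ := ENNReal.exists_nat_gt (hV_top x)
    Set.mem_iUnion.2 ⟨n, hn.le⟩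
  calc ∫⁻ x, V x ∂μ = ∫⁻ x in ⋃ n : ℕ, {x | V x ≤ n}, V x ∂μ := by rw [hunion, setLIntegral_univ]
    _ = ⨆ n : ℕ, ∫⁻ x in {x | V x ≤ n}, V x ∂μ :=
      setLIntegral_iUnion_of_directed _ hmono.directed_le
    _ ≤ b * μ Set.univ / (1 - r) :=
      iSup_le fun n => setLIntegral_le_of_lintegral_min_le hV hr n (h n)

end Drift

lemma condExp_indicator_one_ae_eq_iff {Ω : Type*} {m m₀ : MeasurableSpace Ω} {P : Measure Ω}
    [IsFiniteMeasure P] (hm : m ≤ m₀) {B : Set Ω} (hB : MeasurableSet B) {g : Ω → ℝ}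
    (hg : AEStronglyMeasurable[m] g P) (hg_nonneg : 0 ≤ g) :
    P[B.indicator fun _ => (1 : ℝ)|m] =ᵐ[P] g ↔
      ∀ A, MeasurableSet[m] A → P (A ∩ B) = ∫⁻ ω in A, ENNReal.ofReal (g ω) ∂P := by
  have hint : Integrable (B.indicator fun _ => (1 : ℝ)) P := (integrable_const 1).indicator hB
  have hset : ∀ A, ∫ ω in A, B.indicator (fun _ => (1 : ℝ)) ω ∂P = P.real (A ∩ B) := fun A => by
    rw [setIntegral_indicator hB, setIntegral_const, smul_eq_mul, mul_one]
  constructor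
  · intro h A hA
    have hgint : Integrable g P := integrable_condExp.congr h
    rw [← ofReal_integral_eq_lintegral_ofReal hgint.integrableOn (.of_forall hg_nonneg),
      ← setIntegral_congr_ae (hm A hA) (h.mono fun ω hω _ => hω), setIntegral_condExp hm hint hA,
      hset, ofReal_measureReal]
  · intro h
    have hgint : Integrable g P := by
      refine ⟨hg.mono hm, ?_⟩
      rw [hasFiniteIntegral_iff_ofReal (.of_forall hg_nonneg), ← setLIntegral_univ,
        ← h _ MeasurableSet.univ]
      exact measure_lt_top _ _
    refine (ae_eq_condExp_of_forall_setIntegral_eq hm hint (fun A _ _ => hgint.integrableOn)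
      (fun A hA _ => ?_) hg).symm
    rw [hset, integral_eq_lintegral_of_nonneg_ae (.of_forall hg_nonneg)
      (hg.mono hm).restrict, ← h A hA, Measure.real]

lemma map_restrict_inter_eq_withDensity {Ω X : Type*} {m m₀ : MeasurableSpace Ω}
    [MeasurableSpace X] {P : Measure Ω} (hm : m ≤ m₀) {F : Ω → X} (hF : Measurable[m] F)
    {q : X → ℝ≥0∞} (hq : Measurable q) {B : Set Ω}
    (h : ∀ A, MeasurableSet[m] A → P (A ∩ B) = ∫⁻ ω in A, q (F ω) ∂P) {A : Set Ω}
    (hA : MeasurableSet[m] A) :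
    (P.restrict (A ∩ B)).map F = ((P.restrict A).map F).withDensity q := by
  have hF₀ : Measurable F := hF.mono hm le_rfl
  ext s hs
  rw [Measure.map_apply hF₀ hs, Measure.restrict_apply (hF₀ hs), ← Set.inter_assoc,
    h _ (MeasurableSet.inter (hF hs) hA), withDensity_apply _ hs, Measure.restrict_map hF₀ hs,
    lintegral_map hq hF₀, Measure.restrict_restrict (hF₀ hs)]

section Sums

variable {α : Type*}

lemma tsum_option_eq_of_none {g : Option α → ℝ≥0∞} (h : g none = 0) :
    ∑' o, g o = ∑' a, g (some a) := by
  refine ((Option.some_injective α).tsum_eq fun o ho => ?_).symm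
  cases o with
  | none => exact absurd h ho
  | some a => exact ⟨a, rfl⟩

lemma tsum_ofFn_succ (n : ℕ) (f : List α → ℝ≥0∞) :
    ∑' v : Fin (n + 1) → α, f (List.ofFn v) =
      ∑' v : Fin n → α, ∑' x, f (x :: List.ofFn v) := by
  rw [← (Fin.consEquiv fun _ => α).tsum_eq, ENNReal.tsum_comm, ← ENNReal.tsum_prod]
  simp [Fin.consEquiv]

lemma tsum_ofFn_append_eq {f : List α → ℝ≥0∞} (hf : ∀ l, ∑' x, f (x :: l) = f l) (n : ℕ)
    (l : List α) : ∑' v : Fin n → α, f (List.ofFn v ++ l) = f l := by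
  induction n with
  | zero => simp
  | succ n ih => simp_rw [tsum_ofFn_succ n fun u => f (u ++ l), List.cons_append, hf, ih]

end Sums

namespace MarkovSystem

variable {K : Type*} [MetricSpace K] [MeasurableSpace K] {N E : Type*}

/-- The composition `w_{e_n} ∘ ⋯ ∘ w_{e_1}` of the maps along the word `[e_1, …, e_n]`. -/
def wcomp (M : MarkovSystem K N E) : List (Option E) → K → K
  | [], x => x
  | o :: es, x => M.wcomp es (M.wext o x)

/-- The image `w_{e_n} ∘ ⋯ ∘ w_{e_1} (x_{i(e_1)})` of the base point along the word
`[e_1, …, e_n]`, so that `orbit` is `wordOrbit` of the last letters of the past. -/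
def wordOrbit (M : MarkovSystem K N E) (j0 : N) (xp : N → K) (es : List (Option E)) : K :=
  M.wcomp es (xp (M.iext j0 (es.headD none)))

/-- The word `[σ_{1-n}, …, σ_0]` of the last `n` letters of the past of `σ`. -/
def pastWord : ℕ → CodeSpace E → List (Option E)
  | 0, _ => []
  | n + 1, σ => σ (-(n : ℤ)) :: pastWord n σ

/-- The cylinder `_{1-n}[e_1, …, e_n]` of the sequences whose past ends with `[e_1, …, e_n]`. -/
def pastCylinder (es : List (Option E)) : Set (CodeSpace E) :=
  {σ | pastWord es.length σ = es}

/-- The law of the Markov process started from `ν`, on the event that its first letters are `es`,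
at the time it has read them: the measure `f ↦ ∫ P_x(es) f(w_{e_n} ∘ ⋯ ∘ w_{e_1} x) dν(x)`. -/
noncomputable def wordMeasure (M : MarkovSystem K N E) (es : List (Option E)) (ν : Measure K) :
    Measure K :=
  (ν.withDensity fun x => ENNReal.ofReal (M.wordProb es x)).map (M.wcomp es)

/-- `F(Λ(· ∩ _{1-n}[e_1, …, e_n]))` is `wordMeasure` for every word: jointly with the past letters,
`F` is distributed under `Λ` like the state of the stationary Markov process with initial law `μ`.
This is what `IsEquilibrium` and `IsPhiOf` have in common. -/
def HasCodingLaw (M : MarkovSystem K N E) (j0 : N) (xp : N → K) (μ : Measure K)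
    (Λ : Measure (CodeSpace E)) : Prop :=
  ∀ es : List (Option E), (Λ.restrict (pastCylinder es)).map (M.code j0 xp) = M.wordMeasure es μ

section Kset

variable (M : MarkovSystem K N E) (j0 : N) (xp : N → K)

@[simp] lemma wext_some (e : E) : M.wext (some e) = M.w e := rfl

@[simp] lemma pext_some (e : E) : M.pext (some e) = M.p e := rfl

@[simp] lemma pext_none (x : K) : M.pext none x = 0 := rfl

lemma pext_nonneg (o : Option E) (x : K) : 0 ≤ M.pext o x := by
  cases o with
  | none => exact le_rfl
  | some e => exact M.p_nonneg e x

lemma exists_mem_Kset (x : K) : ∃ j, x ∈ M.Kset j :=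
  Set.mem_iUnion.1 (M.Kset_cover ▸ Set.mem_univ x)

lemma eq_of_mem_Kset {x : K} {j j' : N} (h : x ∈ M.Kset j) (h' : x ∈ M.Kset j') : j = j' :=
  by_contra fun hne => Set.disjoint_left.1 (M.Kset_disjoint hne) h h'

lemma exists_eq_some_of_pext_ne_zero {o : Option E} {x : K} (h : M.pext o x ≠ 0) :
    ∃ e, o = some e ∧ x ∈ M.Kset (M.i e) := by
  cases o with
  | none => exact absurd rfl h
  | some e => exact ⟨e, rfl, by_contra fun hx => h (M.p_zero_outside e x hx)⟩

lemma tsum_pext_mul_eq (g : Option E → ℝ≥0∞) {x : K} {j : N} (hx : x ∈ M.Kset j) :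
    ∑' o : Option E, ENNReal.ofReal (M.pext o x) * g o =
      ∑' e : {e : E // M.i e = j}, ENNReal.ofReal (M.p e.val x) * g (some e.val) := by
  have hinj : Function.Injective fun e : {e : E // M.i e = j} => some e.val :=
    (Option.some_injective E).comp Subtype.val_injective
  rw [← hinj.tsum_eq]
  · rfl
  · intro o ho
    obtain ⟨e, rfl, he⟩ := M.exists_eq_some_of_pext_ne_zero (o := o) (x := x) fun h => by
      simp [h] at ho
    exact ⟨⟨e, M.eq_of_mem_Kset he hx⟩, rfl⟩

lemma tsum_pext_eq_one (x : K) : ∑' o : Option E, ENNReal.ofReal (M.pext o x) = 1 := by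
  obtain ⟨j, hx⟩ := M.exists_mem_Kset x
  have hsum : Summable fun e : {e : E // M.i e = j} => M.p e.val x := by
    by_contra hns
    have h := M.p_tsum_one j x hx
    rw [tsum_eq_zero_of_not_summable hns] at h
    exact zero_ne_one h
  have h := M.tsum_pext_mul_eq (fun _ => 1) hx
  simp only [mul_one] at h
  rw [h, ← ENNReal.ofReal_tsum_of_nonneg (fun e => M.p_nonneg _ _) hsum, M.p_tsum_one j x hx,
    ENNReal.ofReal_one]

lemma markovOp_eq_tsum_pext (f : K → ℝ≥0∞) (x : K) :
    M.markovOp f x = ∑' o : Option E, ENNReal.ofReal (M.pext o x) * f (M.wext o x) := by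
  rw [tsum_option_eq_of_none (by simp)]
  rfl

end Kset

section WordMeasure

variable (M : MarkovSystem K N E)

lemma wordProb_nonneg (es : List (Option E)) (x : K) : 0 ≤ M.wordProb es x := by
  induction es generalizing x with
  | nil => exact zero_le_one
  | cons o es ih => exact mul_nonneg (M.pext_nonneg o x) (ih _)

lemma measurable_wext (o : Option E) : Measurable (M.wext o) := by
  cases o with
  | none => exact measurable_id
  | some e => exact M.w_measurable e

lemma measurable_pext (o : Option E) : Measurable (M.pext o) := by
  cases o with
  | none => exact measurable_const
  | some e => exact M.p_measurable e

lemma measurable_wcomp (es : List (Option E)) : Measurable (M.wcomp es) := by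
  induction es with
  | nil => exact measurable_id
  | cons o es ih => exact ih.comp (M.measurable_wext o)

lemma measurable_wordProb (es : List (Option E)) : Measurable (M.wordProb es) := by
  induction es with
  | nil => exact measurable_const
  | cons o es ih => exact (M.measurable_pext o).mul (ih.comp (M.measurable_wext o))

lemma wcomp_append (es es' : List (Option E)) (x : K) :
    M.wcomp (es ++ es') x = M.wcomp es' (M.wcomp es x) := by
  induction es generalizing x with
  | nil => rfl
  | cons o _ ih => exact ih _

lemma wordProb_append (es es' : List (Option E)) (x : K) :
    M.wordProb (es ++ es') x = M.wordProb es x * M.wordProb es' (M.wcomp es x) := by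
  induction es generalizing x with
  | nil => simp [wordProb, wcomp]
  | cons o es ih => simp [wordProb, wcomp, ih, mul_assoc]

lemma measurable_wordProb_mul_wcomp (es : List (Option E)) {f : K → ℝ≥0∞} (hf : Measurable f) :
    Measurable fun x => ENNReal.ofReal (M.wordProb es x) * f (M.wcomp es x) :=
  (M.measurable_wordProb es).ennreal_ofReal.mul (hf.comp (M.measurable_wcomp es))

lemma lintegral_wordMeasure (es : List (Option E)) (ν : Measure K) {f : K → ℝ≥0∞}
    (hf : Measurable f) :
    ∫⁻ x, f x ∂(M.wordMeasure es ν) =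
      ∫⁻ x, ENNReal.ofReal (M.wordProb es x) * f (M.wcomp es x) ∂ν := by
  rw [wordMeasure, lintegral_map hf (M.measurable_wcomp es)]
  exact lintegral_withDensity_eq_lintegral_mul ν (M.measurable_wordProb es).ennreal_ofReal
    (hf.comp (M.measurable_wcomp es))

lemma wordMeasure_univ (es : List (Option E)) (ν : Measure K) :
    M.wordMeasure es ν Set.univ = ∫⁻ x, ENNReal.ofReal (M.wordProb es x) ∂ν := by
  simpa using M.lintegral_wordMeasure es ν measurable_one

@[simp] lemma wordMeasure_nil (ν : Measure K) : M.wordMeasure [] ν = ν :=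
  Measure.ext_of_lintegral _ fun f hf => by simp [M.lintegral_wordMeasure [] ν hf, wordProb, wcomp]

lemma wordMeasure_append (es es' : List (Option E)) (ν : Measure K) :
    M.wordMeasure (es ++ es') ν = M.wordMeasure es' (M.wordMeasure es ν) := by
  refine Measure.ext_of_lintegral _ fun f hf => ?_
  rw [lintegral_wordMeasure _ _ _ hf, lintegral_wordMeasure _ _ _ hf,
    lintegral_wordMeasure _ _ _ (M.measurable_wordProb_mul_wcomp es' hf)]
  simp only [wordProb_append, wcomp_append, ENNReal.ofReal_mul (M.wordProb_nonneg _ _), mul_assoc]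

lemma wordMeasure_singleton_none (ν : Measure K) : M.wordMeasure [none] ν = 0 := by
  simp [wordMeasure, wordProb]

lemma wordMeasure_singleton_some (e : E) (ν : Measure K) :
    M.wordMeasure [some e] ν = (ν.withDensity fun x => ENNReal.ofReal (M.p e x)).map (M.w e) := by
  simp only [wordMeasure, wordProb, pext_some, mul_one]
  rfl

lemma adjOp_eq_sum_wordMeasure (ν : Measure K) :
    M.adjOp ν = Measure.sum fun o : Option E => M.wordMeasure [o] ν := by
  ext s hs
  rw [adjOp, Measure.sum_apply _ hs, Measure.sum_apply _ hs,
    tsum_option_eq_of_none (by simp [wordMeasure_singleton_none])]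
  simp only [wordMeasure_singleton_some]

lemma lintegral_adjOp [Countable E] (ν : Measure K) {f : K → ℝ≥0∞} (hf : Measurable f) :
    ∫⁻ x, f x ∂(M.adjOp ν) = ∫⁻ x, M.markovOp f x ∂ν := by
  rw [adjOp_eq_sum_wordMeasure, lintegral_sum_measure]
  simp_rw [lintegral_wordMeasure _ _ _ hf]
  rw [← lintegral_tsum fun o => (M.measurable_wordProb_mul_wcomp [o] hf).aemeasurable]
  simp only [markovOp_eq_tsum_pext, wordProb, wcomp, mul_one]

variable {M} {μ : Measure K}

lemma IsInvariantMeasure.tsum_lintegral_wordMeasure_cons (hμ : M.IsInvariantMeasure μ)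
    (es : List (Option E)) {f : K → ℝ≥0∞} (hf : Measurable f) :
    ∑' o, ∫⁻ x, f x ∂(M.wordMeasure (o :: es) μ) = ∫⁻ x, f x ∂(M.wordMeasure es μ) := by
  simp_rw [← List.singleton_append (l := es), wordMeasure_append, lintegral_wordMeasure _ es _ hf]
  rw [← lintegral_sum_measure, ← adjOp_eq_sum_wordMeasure, hμ.2]

lemma IsInvariantMeasure.tsum_lintegral_wordMeasure_append (hμ : M.IsInvariantMeasure μ) (n : ℕ)
    (es : List (Option E)) {f : K → ℝ≥0∞} (hf : Measurable f) :
    ∑' v : Fin n → Option E, ∫⁻ x, f x ∂(M.wordMeasure (List.ofFn v ++ es) μ) =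
      ∫⁻ x, f x ∂(M.wordMeasure es μ) :=
  tsum_ofFn_append_eq (f := fun es => ∫⁻ x, f x ∂(M.wordMeasure es μ))
    (fun es => hμ.tsum_lintegral_wordMeasure_cons es hf) n es

end WordMeasure

section Contraction

variable {M : MarkovSystem K N E} {xp : N → K} {a : ℝ}

lemma IsContractive.tsum_pext_mul_edist_le (hcon : M.IsContractive a) {x y : K} {j : N}
    (hx : x ∈ M.Kset j) (hy : y ∈ M.Kset j) :
    ∑' o : Option E, ENNReal.ofReal (M.pext o x) * edist (M.wext o x) (M.wext o y) ≤
      ENNReal.ofReal a * edist x y := by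
  rw [M.tsum_pext_mul_eq (fun o => edist (M.wext o x) (M.wext o y)) hx]
  simpa only [wext_some, ENNReal.ofReal_mul (M.p_nonneg _ _), ENNReal.ofReal_mul' dist_nonneg,
    ← edist_dist] using hcon j x hx y hy

lemma IsContractive.tsum_pext_mul_le (hcon : M.IsContractive a) {G : K → K → ℝ≥0∞} {c : ℝ≥0∞}
    (hG : ∀ j, ∀ x ∈ M.Kset j, ∀ y ∈ M.Kset j, G x y ≤ c * edist x y) {x y : K} {j : N}
    (hx : x ∈ M.Kset j) (hy : y ∈ M.Kset j) :
    ∑' o : Option E, ENNReal.ofReal (M.pext o x) * G (M.wext o x) (M.wext o y) ≤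
      ENNReal.ofReal a * c * edist x y := by
  have hterm : ∀ o : Option E, ENNReal.ofReal (M.pext o x) * G (M.wext o x) (M.wext o y) ≤
      c * (ENNReal.ofReal (M.pext o x) * edist (M.wext o x) (M.wext o y)) := fun o => by
    by_cases h0 : M.pext o x = 0
    · simp [h0]
    obtain ⟨e, rfl, he⟩ := M.exists_eq_some_of_pext_ne_zero h0
    obtain rfl := M.eq_of_mem_Kset he hx
    rw [mul_left_comm]
    gcongr
    exact hG _ _ (M.w_mapsTo e hx) _ (M.w_mapsTo e hy)
  calc ∑' o : Option E, ENNReal.ofReal (M.pext o x) * G (M.wext o x) (M.wext o y)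
      ≤ c * ∑' o : Option E, ENNReal.ofReal (M.pext o x) * edist (M.wext o x) (M.wext o y) := by
        rw [← ENNReal.tsum_mul_left]
        exact ENNReal.tsum_le_tsum hterm
    _ ≤ c * (ENNReal.ofReal a * edist x y) := by
        gcongr
        exact hcon.tsum_pext_mul_edist_le hx hy
    _ = ENNReal.ofReal a * c * edist x y := by ring

lemma IsContractive.wordProb_mul_edist_wcomp_le (hcon : M.IsContractive a) (es : List (Option E)) :
    ∀ j, ∀ x ∈ M.Kset j, ∀ y ∈ M.Kset j,
      ENNReal.ofReal (M.wordProb es x) * edist (M.wcomp es x) (M.wcomp es y) ≤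
        ENNReal.ofReal a ^ es.length * edist x y := by
  induction es with
  | nil => simp [wordProb, wcomp]
  | cons o es ih =>
    intro j x hx y hy
    rw [wordProb, ENNReal.ofReal_mul (M.pext_nonneg _ _), mul_assoc, List.length_cons, pow_succ']
    exact (ENNReal.le_tsum o).trans (hcon.tsum_pext_mul_le ih hx hy)

lemma IsContractive.tsum_wordProb_mul_edist_wcomp_le (hcon : M.IsContractive a) (n : ℕ)
    (es : List (Option E)) : ∀ j, ∀ x ∈ M.Kset j, ∀ y ∈ M.Kset j,
      ∑' v : Fin n → Option E, ENNReal.ofReal (M.wordProb (List.ofFn v ++ es) x) *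
          edist (M.wcomp (List.ofFn v ++ es) x) (M.wcomp (List.ofFn v ++ es) y) ≤
        ENNReal.ofReal a ^ (n + es.length) * edist x y := by
  induction n with
  | zero => simpa using hcon.wordProb_mul_edist_wcomp_le es
  | succ n ih =>
    intro j x hx y hy
    rw [tsum_ofFn_succ n fun u => ENNReal.ofReal (M.wordProb (u ++ es) x) *
      edist (M.wcomp (u ++ es) x) (M.wcomp (u ++ es) y), ENNReal.tsum_comm, Nat.add_right_comm,
      pow_succ']
    simp only [List.cons_append, wordProb, wcomp, ENNReal.ofReal_mul (M.pext_nonneg _ _),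
      mul_assoc, ENNReal.tsum_mul_left]
    rw [← mul_assoc]
    exact hcon.tsum_pext_mul_le ih hx hy

lemma Lfun_eq (M : MarkovSystem K N E) (xp : N → K) {x : K} {j : N} (hx : x ∈ M.Kset j) :
    M.Lfun xp x = edist x (xp j) := by
  rw [Lfun, tsum_eq_single j]
  · rw [Set.indicator_of_mem hx, edist_dist]
  · exact fun j' hj' => Set.indicator_of_notMem (fun h => hj' (M.eq_of_mem_Kset h hx)) _

lemma Lfun_ne_top (M : MarkovSystem K N E) (xp : N → K) (x : K) : M.Lfun xp x ≠ ⊤ := by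
  obtain ⟨j, hx⟩ := M.exists_mem_Kset x
  rw [M.Lfun_eq xp hx]
  exact edist_ne_top _ _

lemma measurable_Lfun [OpensMeasurableSpace K] [Countable E] (M : MarkovSystem K N E)
    (xp : N → K) : Measurable (M.Lfun xp) :=
  have := M.i_surj.countable
  Measurable.tsum fun j =>
    (continuous_id.dist continuous_const).measurable.ennreal_ofReal.indicator (M.Kset_measurable j)

lemma IsContractive.markovOp_Lfun_le (hcon : M.IsContractive a) (hxp : ∀ j, xp j ∈ M.Kset j)
    (x : K) : M.markovOp (M.Lfun xp) x ≤ ENNReal.ofReal a * M.Lfun xp x + M.bConst xp := by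
  obtain ⟨j, hx⟩ := M.exists_mem_Kset x
  have hb : ∑' o : Option E, ENNReal.ofReal (M.pext o x) *
      o.elim 0 (fun e => edist (M.w e (xp (M.i e))) (xp (M.t e))) ≤ M.bConst xp := by
    rw [M.tsum_pext_mul_eq _ hx]
    refine le_trans (le_of_eq ?_) (le_iSup_of_le j (le_iSup₂_of_le x hx le_rfl))
    simp only [Option.elim_some, edist_dist, ENNReal.ofReal_mul (M.p_nonneg _ _)]
  rw [markovOp_eq_tsum_pext, M.Lfun_eq xp hx]
  refine le_trans ?_ (add_le_add (hcon.tsum_pext_mul_edist_le hx (hxp j)) hb)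
  rw [← ENNReal.tsum_add]
  refine ENNReal.tsum_le_tsum fun o => ?_
  by_cases h0 : M.pext o x = 0
  · simp [h0]
  obtain ⟨e, rfl, he⟩ := M.exists_eq_some_of_pext_ne_zero h0
  obtain rfl := M.eq_of_mem_Kset he hx
  rw [← mul_add, wext_some, M.Lfun_eq xp (M.w_mapsTo e hx)]
  gcongr
  exact edist_triangle _ _ _

lemma markovOp_min_le (M : MarkovSystem K N E) (f : K → ℝ≥0∞) (c : ℝ≥0∞) (x : K) :
    M.markovOp (fun y => min (f y) c) x ≤ min (M.markovOp f x) c := by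
  simp only [markovOp_eq_tsum_pext]
  refine le_min (ENNReal.tsum_le_tsum fun o => by gcongr; exact min_le_left _ _) ?_
  calc ∑' o : Option E, ENNReal.ofReal (M.pext o x) * min (f (M.wext o x)) c
      ≤ ∑' o : Option E, ENNReal.ofReal (M.pext o x) * c :=
        ENNReal.tsum_le_tsum fun o => by gcongr; exact min_le_right _ _
    _ = c := by rw [ENNReal.tsum_mul_right, M.tsum_pext_eq_one, one_mul]

variable [OpensMeasurableSpace K] [Countable E] {μ : Measure K}

lemma IsContractive.lintegral_Lfun_ne_top (hcon : M.IsContractive a) (ha1 : a < 1)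
    (hxp : ∀ j, xp j ∈ M.Kset j) (hb : M.bConst xp ≠ ⊤) (hμ : M.IsInvariantMeasure μ) :
    ∫⁻ x, M.Lfun xp x ∂μ ≠ ⊤ := by
  have := hμ.1
  have hL := M.measurable_Lfun xp
  have hr : ENNReal.ofReal a < 1 := ENNReal.ofReal_lt_one.2 ha1
  refine ne_top_of_le_ne_top ?_ (lintegral_le_of_forall_lintegral_min_le (b := M.bConst xp) hL
    (M.Lfun_ne_top xp) hr fun n => ?_)
  · rw [measure_univ, mul_one]
    exact ENNReal.div_ne_top hb (tsub_pos_of_lt hr).ne'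
  calc ∫⁻ x, min (M.Lfun xp x) n ∂μ
      = ∫⁻ x, M.markovOp (fun y => min (M.Lfun xp y) n) x ∂μ := by
        rw [← M.lintegral_adjOp _ (hL.min measurable_const), hμ.2]
    _ ≤ ∫⁻ x, min (ENNReal.ofReal a * M.Lfun xp x + M.bConst xp) n ∂μ :=
        lintegral_mono fun x =>
          (M.markovOp_min_le _ _ x).trans (min_le_min_right _ (hcon.markovOp_Lfun_le hxp x))

end Contraction

section WordOrbit

variable {M : MarkovSystem K N E} {xp : N → K} {a : ℝ}

lemma iext_headD_eq (M : MarkovSystem K N E) (j0 : N) {es : List (Option E)} (hes : es ≠ [])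
    {x : K} {j : N} (h : M.wordProb es x ≠ 0) (hx : x ∈ M.Kset j) :
    M.iext j0 (es.headD none) = j := by
  cases es with
  | nil => exact absurd rfl hes
  | cons o es =>
    obtain ⟨e, rfl, he⟩ := M.exists_eq_some_of_pext_ne_zero (left_ne_zero_of_mul h)
    exact M.eq_of_mem_Kset he hx

lemma IsContractive.tsum_wordProb_mul_edist_wordOrbit_le (hcon : M.IsContractive a) (j0 : N)
    (hxp : ∀ j, xp j ∈ M.Kset j) (n : ℕ) (es : List (Option E)) (x : K) :
    ∑' v : Fin (n + 1) → Option E, ENNReal.ofReal (M.wordProb (List.ofFn v ++ es) x) *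
        edist (M.wcomp (List.ofFn v ++ es) x) (M.wordOrbit j0 xp (List.ofFn v ++ es)) ≤
      ENNReal.ofReal a ^ (n + 1 + es.length) * M.Lfun xp x := by
  obtain ⟨j, hx⟩ := M.exists_mem_Kset x
  rw [M.Lfun_eq xp hx]
  refine le_trans (ENNReal.tsum_le_tsum fun v => ?_)
    (hcon.tsum_wordProb_mul_edist_wcomp_le (n + 1) es j x hx _ (hxp j))
  by_cases h0 : M.wordProb (List.ofFn v ++ es) x = 0
  · rw [h0, ENNReal.ofReal_zero, zero_mul, zero_mul]
  · rw [wordOrbit, M.iext_headD_eq j0 (by simp) h0 hx]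

lemma IsContractive.tsum_lintegral_edist_wordOrbit_le [OpensMeasurableSpace K]
    [Countable E] (hcon : M.IsContractive a) (j0 : N) (hxp : ∀ j, xp j ∈ M.Kset j) (n : ℕ)
    (es : List (Option E)) (μ : Measure K) :
    ∑' v : Fin (n + 1) → Option E,
        ∫⁻ x, edist x (M.wordOrbit j0 xp (List.ofFn v ++ es))
          ∂(M.wordMeasure (List.ofFn v ++ es) μ) ≤
      ENNReal.ofReal a ^ (n + 1 + es.length) * ∫⁻ x, M.Lfun xp x ∂μ := by
  simp_rw [M.lintegral_wordMeasure _ _ measurable_edist_left]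
  rw [← lintegral_tsum fun v =>
      (M.measurable_wordProb_mul_wcomp _ measurable_edist_left).aemeasurable,
    ← lintegral_const_mul _ (M.measurable_Lfun xp)]
  exact lintegral_mono fun x => hcon.tsum_wordProb_mul_edist_wordOrbit_le j0 hxp n es x

end WordOrbit

section PastWord

@[simp] lemma length_pastWord (n : ℕ) (σ : CodeSpace E) : (pastWord n σ).length = n := by
  induction n with
  | zero => rfl
  | succ n ih => rw [pastWord, List.length_cons, ih]

lemma drop_pastWord (n m : ℕ) (σ : CodeSpace E) :
    (pastWord (n + m) σ).drop n = pastWord m σ := by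
  induction n with
  | zero => rw [zero_add, List.drop_zero]
  | succ n ih => rw [Nat.add_right_comm]; exact ih

lemma pastWord_shiftMap (n : ℕ) (σ : CodeSpace E) :
    pastWord (n + 1) (shiftMap E σ) = pastWord n σ ++ [σ 1] := by
  induction n with
  | zero => simp [pastWord, shiftMap]
  | succ n ih =>
    rw [pastWord, ih, pastWord]
    simp [shiftMap]

@[simp] lemma pastCylinder_nil : pastCylinder ([] : List (Option E)) = Set.univ :=
  Set.eq_univ_of_forall fun _ => rfl

lemma pastCylinder_cons (o : Option E) (es : List (Option E)) :
    pastCylinder (o :: es) = pastCylinder es ∩ {σ | σ (-(es.length : ℤ)) = o} := by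
  ext σ
  simp [pastCylinder, pastWord, and_comm]

lemma preimage_shiftMap_pastCylinder (es : List (Option E)) (o : Option E) :
    shiftMap E ⁻¹' pastCylinder (es ++ [o]) = pastCylinder es ∩ {σ | σ 1 = o} := by
  ext σ
  simp [pastCylinder, pastWord_shiftMap]

lemma pastCylinder_subset_or_disjoint {es es' : List (Option E)} (h : es'.length ≤ es.length) :
    pastCylinder es ⊆ pastCylinder es' ∨ Disjoint (pastCylinder es) (pastCylinder es') := by
  have hdrop : ∀ σ ∈ pastCylinder es, pastWord es'.length σ = es.drop (es.length - es'.length) := by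
    intro σ hσ
    rw [← drop_pastWord (es.length - es'.length), Nat.sub_add_cancel h, hσ]
  by_cases hes : es.drop (es.length - es'.length) = es'
  · exact .inl fun σ hσ => (hdrop σ hσ).trans hes
  · exact .inr (Set.disjoint_left.2 fun σ hσ hσ' => hes ((hdrop σ hσ).symm.trans hσ'))

lemma cylSetL_cons (m : ℤ) (o : Option E) (es : List (Option E)) :
    cylSetL m (o :: es) = {σ | σ m = o} ∩ cylSetL (m + 1) es := by
  ext σ
  constructor
  · intro h
    refine ⟨by simpa using h 0 (by simp), fun k hk => ?_⟩
    simpa [add_assoc, add_comm (1 : ℤ)] using h (k + 1) (by simpa using hk)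
  · rintro ⟨h0, h⟩ k hk
    cases k with
    | zero => simpa using h0
    | succ k => simpa [add_assoc, add_comm (1 : ℤ)] using h k (by simpa using hk)

@[simp] lemma cylSetL_nil (m : ℤ) : cylSetL m ([] : List (Option E)) = Set.univ :=
  Set.eq_univ_of_forall fun _ k hk => absurd hk k.not_lt_zero

lemma cylSetL_eq_pastCylinder (es : List (Option E)) :
    cylSetL (1 - (es.length : ℤ)) es = pastCylinder es := by
  induction es with
  | nil => simp
  | cons o es ih =>
    have hstart : 1 - ((o :: es).length : ℤ) = -(es.length : ℤ) := by simp
    rw [cylSetL_cons, hstart, neg_add_eq_sub, ih, pastCylinder_cons, Set.inter_comm]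

lemma preimage_shiftMap_cylSetL (m : ℤ) (es : List (Option E)) :
    shiftMap E ⁻¹' cylSetL m es = cylSetL (m + 1) es := by
  ext σ
  simp [cylSetL, shiftMap, add_right_comm]

lemma measurableSet_coord_eq (n : ℤ) (o : Option E) : MeasurableSet {σ : CodeSpace E | σ n = o} :=
  (measurable_pi_apply n : Measurable fun σ : CodeSpace E => σ n)
    (MeasurableSpace.measurableSet_top (s := {o}))

lemma measurable_shiftMap : Measurable (shiftMap E) :=
  measurable_pi_lambda _ fun _ => measurable_pi_apply _

lemma measurableSet_cylSetL (m : ℤ) (es : List (Option E)) : MeasurableSet (cylSetL m es) := by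
  induction es generalizing m with
  | nil => simp
  | cons o es ih =>
    rw [cylSetL_cons]
    exact (measurableSet_coord_eq m o).inter (ih _)

lemma pastAlgebra_le : pastAlgebra E ≤ MeasurableSpace.pi := by
  refine MeasurableSpace.generateFrom_le ?_
  rintro _ ⟨es, -, rfl⟩
  exact measurableSet_cylSetL _ _

lemma measurableSet_pastCylinder (es : List (Option E)) :
    MeasurableSet[pastAlgebra E] (pastCylinder es) := by
  by_cases hes : es = []
  · rw [hes, pastCylinder_nil]
    exact MeasurableSet.univ
  · exact MeasurableSpace.measurableSet_generateFrom ⟨es, hes, (cylSetL_eq_pastCylinder es).symm⟩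

lemma pastAlgebra_eq_generateFrom_range :
    pastAlgebra E = MeasurableSpace.generateFrom (Set.range pastCylinder) := by
  refine le_antisymm (MeasurableSpace.generateFrom_mono ?_) (MeasurableSpace.generateFrom_le ?_)
  · rintro _ ⟨es, -, rfl⟩
    exact ⟨es, (cylSetL_eq_pastCylinder es).symm⟩
  · rintro _ ⟨es, rfl⟩
    exact measurableSet_pastCylinder es

lemma isPiSystem_range_pastCylinder : IsPiSystem (Set.range (pastCylinder (E := E))) := by
  have hinter : ∀ {es es' : List (Option E)}, es'.length ≤ es.length →
      (pastCylinder es ∩ pastCylinder es').Nonempty →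
        pastCylinder es ∩ pastCylinder es' = pastCylinder es := fun h hne =>
    Set.inter_eq_left.2 ((pastCylinder_subset_or_disjoint h).resolve_right
      (Set.not_disjoint_iff_nonempty_inter.2 hne))
  rintro _ ⟨es, rfl⟩ _ ⟨es', rfl⟩ hne
  rcases le_total es'.length es.length with h | h
  · exact ⟨es, (hinter h hne).symm⟩
  · rw [Set.inter_comm] at hne ⊢
    exact ⟨es', (hinter h hne).symm⟩

lemma measurable_comp_pastWord [Countable E] {β : Type*} [MeasurableSpace β] (n : ℕ)
    (H : List (Option E) → β) : Measurable[pastAlgebra E] fun σ => H (pastWord n σ) := by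
  intro s _
  have hpre : (fun σ => H (pastWord n σ)) ⁻¹' s =
      ⋃ es : {es // H es ∈ s ∧ es.length = n}, pastCylinder es.1 := by
    ext σ
    simp only [Set.mem_preimage, Set.mem_iUnion]
    refine ⟨fun h => ⟨⟨pastWord n σ, h, length_pastWord n σ⟩, ?_⟩, ?_⟩
    · simp [pastCylinder]
    · rintro ⟨⟨es, hes, rfl⟩, hσ⟩
      rwa [show pastWord es.length σ = es from hσ]
  rw [hpre]
  exact MeasurableSet.iUnion fun es => measurableSet_pastCylinder es.1

end PastWord

section CodeSpaceMeasure

variable {Λ : Measure (CodeSpace E)}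

lemma measure_cylSetL_eq_measure_pastCylinder (hΛ : Measure.map (shiftMap E) Λ = Λ) (m : ℤ)
    (es : List (Option E)) : Λ (cylSetL m es) = Λ (pastCylinder es) := by
  have hstep : ∀ k : ℤ, Λ (cylSetL (k + 1) es) = Λ (cylSetL k es) := fun k => by
    conv_rhs => rw [← hΛ]
    rw [Measure.map_apply measurable_shiftMap (measurableSet_cylSetL k es),
      preimage_shiftMap_cylSetL]
  have hzero : ∀ k : ℤ, Λ (cylSetL k es) = Λ (cylSetL 0 es) := fun k => by
    induction k using Int.induction_on with
    | zero => rfl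
    | succ k ih => rw [hstep, ih]
    | pred k ih => rw [← hstep, sub_add_cancel, ih]
  rw [← cylSetL_eq_pastCylinder, hzero, ← hzero (1 - es.length)]

lemma restrict_pastCylinder_append_singleton (hΛ : Measure.map (shiftMap E) Λ = Λ)
    (es : List (Option E)) (o : Option E) :
    Λ.restrict (pastCylinder (es ++ [o])) =
      (Λ.restrict (pastCylinder es ∩ {σ | σ 1 = o})).map (shiftMap E) := by
  conv_lhs => rw [← hΛ]
  rw [Measure.restrict_map measurable_shiftMap (pastAlgebra_le _ (measurableSet_pastCylinder _)),
    preimage_shiftMap_pastCylinder]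

variable [Countable E]

lemma tsum_setLIntegral_pastCylinder_cons (g : CodeSpace E → ℝ≥0∞) (es : List (Option E)) :
    ∑' o, ∫⁻ σ in pastCylinder (o :: es), g σ ∂Λ = ∫⁻ σ in pastCylinder es, g σ ∂Λ := by
  have hunion : pastCylinder es = ⋃ o, pastCylinder (o :: es) := by
    ext σ
    simp [pastCylinder_cons]
  have hdisj : Pairwise (Function.onFun Disjoint fun o => pastCylinder (o :: es)) :=
    fun o o' hne => Set.disjoint_left.2 fun σ (h : _ = _) (h' : _ = _) =>
      hne (List.cons.inj (h.symm.trans h')).1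
  rw [hunion, lintegral_iUnion (fun o => pastAlgebra_le _ (measurableSet_pastCylinder _)) hdisj]

lemma setLIntegral_comp_pastWord (H : List (Option E) → ℝ≥0∞) (n : ℕ) (es : List (Option E)) :
    ∫⁻ σ in pastCylinder es, H (pastWord (n + es.length) σ) ∂Λ =
      ∑' v : Fin n → Option E,
        H (List.ofFn v ++ es) * Λ (pastCylinder (List.ofFn v ++ es)) := by
  rw [← tsum_ofFn_append_eq (f := fun es' =>
    ∫⁻ σ in pastCylinder es', H (pastWord (n + es.length) σ) ∂Λ)
    (tsum_setLIntegral_pastCylinder_cons _) n es]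
  refine tsum_congr fun v => ?_
  rw [← setLIntegral_const]
  refine setLIntegral_congr_fun (pastAlgebra_le _ (measurableSet_pastCylinder _)) fun σ hσ => ?_
  have hlen : n + es.length = (List.ofFn v ++ es).length := by simp
  rw [hlen, show pastWord _ σ = _ from hσ]

end CodeSpaceMeasure

section Coding

variable (M : MarkovSystem K N E) (j0 : N) (xp : N → K)

lemma iterW_eq_wcomp_pastWord (σ : CodeSpace E) (n : ℕ) (y : K) :
    M.iterW σ n y = M.wcomp (pastWord (n + 1) σ) y := by
  induction n generalizing y with
  | zero => simp [iterW, pastWord, wcomp]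
  | succ n ih =>
    rw [iterW, ih]
    simp [pastWord, wcomp]

lemma orbit_eq_wordOrbit (σ : CodeSpace E) (n : ℕ) :
    M.orbit j0 xp σ n = M.wordOrbit j0 xp (pastWord (n + 1) σ) :=
  M.iterW_eq_wcomp_pastWord σ n _

lemma wext_orbit (σ : CodeSpace E) (n : ℕ) :
    M.wext (σ 1) (M.orbit j0 xp σ n) = M.orbit j0 xp (shiftMap E σ) (n + 1) := by
  rw [orbit_eq_wordOrbit, orbit_eq_wordOrbit, pastWord_shiftMap, wordOrbit, wordOrbit,
    wcomp_append]
  rfl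

lemma tendsto_orbit_code {σ : CodeSpace E} (h : σ ∈ M.codeDomain j0 xp) :
    Tendsto (fun n => M.orbit j0 xp σ n) atTop (𝓝 (M.code j0 xp σ)) := by
  rw [code, dif_pos h]
  exact h.2.choose_spec

variable {xp} in
lemma orbit_mem_Kset (hxp : ∀ j, xp j ∈ M.Kset j) {σ : CodeSpace E} (hσ : σ ∈ M.pathSpace)
    {e : E} (he : σ 0 = some e) (n : ℕ) : M.orbit j0 xp σ n ∈ M.Kset (M.t e) := by
  have key : ∀ (n : ℕ) (e' : E) (y : K), σ (-(n : ℤ)) = some e' → y ∈ M.Kset (M.i e') →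
      M.iterW σ n y ∈ M.Kset (M.t e) := by
    intro n
    induction n with
    | zero =>
      intro e' y h hy
      obtain rfl : e = e' := by simpa [he] using h
      rw [iterW, he]
      exact M.w_mapsTo e hy
    | succ n ih =>
      intro e' y h hy
      obtain ⟨e₁, e₂, h1, h2, h12⟩ := hσ (-((n + 1 : ℕ) : ℤ))
      obtain rfl : e₁ = e' := Option.some_injective _ (h1.symm.trans h)
      rw [show -((n + 1 : ℕ) : ℤ) + 1 = -(n : ℤ) by push_cast; ring] at h2
      push_cast at h
      rw [iterW, h]
      exact ih e₂ _ h2 (h12 ▸ M.w_mapsTo e₁ hy)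
  obtain ⟨e', -, h, -⟩ := hσ (-(n : ℤ))
  refine key n e' _ h ?_
  rw [h]
  exact hxp _

variable {xp} in
lemma code_shiftMap (hxp : ∀ j, xp j ∈ M.Kset j) {σ : CodeSpace E}
    (hσ : σ ∈ M.codeDomain j0 xp) {e : E} (he : σ 1 = some e)
    (hK : M.code j0 xp σ ∈ M.Kset (M.i e)) (hw : ContinuousOn (M.w e) (M.Kset (M.i e))) :
    M.code j0 xp (shiftMap E σ) = M.w e (M.code j0 xp σ) := by
  obtain ⟨e₀, e₁, h0, h1, h01⟩ := hσ.1 0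
  obtain rfl : e₁ = e := Option.some_injective _ (h1.symm.trans he)
  have horbit : Tendsto (fun n => M.orbit j0 xp σ n) atTop
      (𝓝[M.Kset (M.i e₁)] (M.code j0 xp σ)) :=
    tendsto_nhdsWithin_iff.2 ⟨M.tendsto_orbit_code j0 xp hσ,
      .of_forall fun n => h01 ▸ M.orbit_mem_Kset j0 hxp hσ.1 h0 n⟩
  have hlim : Tendsto (fun n => M.orbit j0 xp (shiftMap E σ) n) atTop
      (𝓝 (M.w e₁ (M.code j0 xp σ))) := by
    rw [← tendsto_add_atTop_iff_nat 1]
    refine ((hw _ hK).tendsto.comp horbit).congr fun n => ?_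
    rw [← wext_orbit, he]
    rfl
  exact tendsto_nhds_unique (M.tendsto_orbit_code j0 xp ⟨fun n => hσ.1 (n + 1), _, hlim⟩) hlim

lemma measurableSet_pathSpace [Countable E] : MeasurableSet M.pathSpace := by
  have : M.pathSpace = ⋂ n : ℤ, ⋃ e : E, ⋃ e' : E, ⋃ _ : M.i e' = M.t e,
      {σ | σ n = some e} ∩ {σ | σ (n + 1) = some e'} := by
    ext σ
    simp only [pathSpace, Set.mem_ofPred_eq, Set.mem_iInter, Set.mem_iUnion, Set.mem_inter_iff,
      exists_prop, and_comm, and_assoc]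
  rw [this]
  exact MeasurableSet.iInter fun n => MeasurableSet.iUnion fun e => MeasurableSet.iUnion fun e' =>
    MeasurableSet.iUnion fun _ => (measurableSet_coord_eq _ _).inter (measurableSet_coord_eq _ _)

variable [BorelSpace K] [Countable E]

lemma stronglyMeasurable_orbit (n : ℕ) :
    StronglyMeasurable[pastAlgebra E] fun σ => M.orbit j0 xp σ n := by
  simp_rw [orbit_eq_wordOrbit]
  refine stronglyMeasurable_iff_measurable_separable.2
    ⟨measurable_comp_pastWord (n + 1) (M.wordOrbit j0 xp), ?_⟩
  refine (Set.Countable.mono ?_ (Set.countable_range (M.wordOrbit j0 xp))).isSeparable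
  rintro _ ⟨σ, rfl⟩
  exact ⟨_, rfl⟩

variable [CompleteSpace K]

lemma measurableSet_codeDomain : MeasurableSet (M.codeDomain j0 xp) :=
  M.measurableSet_pathSpace.inter <| pastAlgebra_le _ <|
    @StronglyMeasurable.measurableSet_exists_tendsto _ _ _ (pastAlgebra E) _ _ _ _ _ _
      fun n => M.stronglyMeasurable_orbit j0 xp n

-- `codeDomain` involves the future through `pathSpace`, so `code` itself need not be measurable
-- with respect to the past.
lemma exists_measurable_eqOn_code : ∃ F : CodeSpace E → K, Measurable[pastAlgebra E] F ∧
    Set.EqOn F (M.code j0 xp) (M.codeDomain j0 xp) := by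
  have : Nonempty K := ⟨xp j0⟩
  refine ⟨fun σ => limUnder atTop fun n => M.orbit j0 xp σ n,
    (@StronglyMeasurable.limUnder _ _ _ (pastAlgebra E) _ _ _ _ _ _ _
      fun n => M.stronglyMeasurable_orbit j0 xp n).measurable,
    fun σ hσ => (M.tendsto_orbit_code j0 xp hσ).limUnder_eq⟩

lemma aemeasurable_code {Λ : Measure (CodeSpace E)} (hD : ∀ᵐ σ ∂Λ, σ ∈ M.codeDomain j0 xp) :
    AEMeasurable (M.code j0 xp) Λ := by
  obtain ⟨F, hF, hFD⟩ := M.exists_measurable_eqOn_code j0 xp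
  exact ⟨F, hF.mono pastAlgebra_le le_rfl, hD.mono fun σ hσ => (hFD hσ).symm⟩

end Coding

section Phi

variable {M : MarkovSystem K N E} {j0 : N} {xp : N → K} {a : ℝ} {μ : Measure K}
  {Λ : Measure (CodeSpace E)}

lemma IsPhiOf.measure_pastCylinder (hΦ : M.IsPhiOf μ Λ) (es : List (Option E)) :
    Λ (pastCylinder es) = M.wordMeasure es μ Set.univ := by
  rw [← measure_cylSetL_eq_measure_pastCylinder hΦ.2.1 0, hΦ.2.2 0 le_rfl, wordMeasure_univ]

variable [Countable E]

lemma IsPhiOf.setLIntegral_comp_pastWord (hΦ : M.IsPhiOf μ Λ) (H : List (Option E) → ℝ≥0∞) (n : ℕ)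
    (es : List (Option E)) :
    ∫⁻ σ in pastCylinder es, H (pastWord (n + es.length) σ) ∂Λ =
      ∑' v : Fin n → Option E,
        H (List.ofFn v ++ es) * M.wordMeasure (List.ofFn v ++ es) μ Set.univ := by
  simp_rw [MarkovSystem.setLIntegral_comp_pastWord, hΦ.measure_pastCylinder]

lemma IsPhiOf.ae_mem_pathSpace (hΦ : M.IsPhiOf μ Λ) : ∀ᵐ σ ∂Λ, σ ∈ M.pathSpace := by
  have hpos : ∀ᵐ σ ∂Λ, ∀ n : ℤ, ∃ x, M.wordProb [σ n, σ (n + 1)] x ≠ 0 := by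
    have hnull : ∀ᵐ σ ∂Λ, ∀ (n : ℤ) (o o' : Option E), (∀ x, M.wordProb [o, o'] x = 0) →
        σ ∉ cylSetL n [o, o'] := by
      refine ae_all_iff.2 fun n => ae_all_iff.2 fun o => ae_all_iff.2 fun o' => ?_
      by_cases h0 : ∀ x, M.wordProb [o, o'] x = 0
      · have hzero : Λ (cylSetL n [o, o']) = 0 := by
          simp [measure_cylSetL_eq_measure_pastCylinder hΦ.2.1, hΦ.measure_pastCylinder,
            wordMeasure_univ, h0]
        filter_upwards [measure_eq_zero_iff_ae_notMem.1 hzero] with σ hσ _ using hσ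
      · exact .of_forall fun σ h => absurd h h0
    filter_upwards [hnull] with σ hσ n
    simpa [cylSetL_cons] using mt (hσ n (σ n) (σ (n + 1)))
  filter_upwards [hpos] with σ hσ n
  obtain ⟨x, hx⟩ := hσ n
  obtain ⟨e, he, hxe⟩ := M.exists_eq_some_of_pext_ne_zero (left_ne_zero_of_mul hx)
  obtain ⟨e', he', hxe'⟩ := M.exists_eq_some_of_pext_ne_zero
    (left_ne_zero_of_mul (right_ne_zero_of_mul hx))
  rw [he] at hxe'
  exact ⟨e, e', he, he', M.eq_of_mem_Kset hxe' (M.w_mapsTo e hxe)⟩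

lemma IsPhiOf.lintegral_edist_orbit_le [OpensMeasurableSpace K]
    (hΦ : M.IsPhiOf μ Λ) (hμ : M.IsInvariantMeasure μ) (hcon : M.IsContractive a)
    (j0 : N) (hxp : ∀ j, xp j ∈ M.Kset j) (n : ℕ) :
    ∫⁻ σ, edist (M.orbit j0 xp σ n) (M.orbit j0 xp σ (n + 1)) ∂Λ ≤
      ENNReal.ofReal a ^ (n + 1) * ∫⁻ x, M.Lfun xp x ∂μ +
        ENNReal.ofReal a ^ (n + 2) * ∫⁻ x, M.Lfun xp x ∂μ := by
  let z := M.wordOrbit j0 xp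
  let ν := fun u : Fin (n + 2) → Option E => M.wordMeasure (List.ofFn u) μ
  -- Both orbit points approximate the state read off after the word; the one along the tail does
  -- not see the first letter, which invariance sums out.
  have htail : ∑' u, ∫⁻ x, edist x (z (List.ofFn u).tail) ∂(ν u) ≤
      ENNReal.ofReal a ^ (n + 1) * ∫⁻ x, M.Lfun xp x ∂μ := by
    rw [tsum_ofFn_succ (n + 1) fun es => ∫⁻ x, edist x (z es.tail) ∂(M.wordMeasure es μ)]
    simp only [List.tail_cons, hμ.tsum_lintegral_wordMeasure_cons _ measurable_edist_left]
    simpa only [List.append_nil, List.length_nil, add_zero] using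
      hcon.tsum_lintegral_edist_wordOrbit_le j0 hxp n [] μ
  have hword : ∑' u, ∫⁻ x, edist x (z (List.ofFn u)) ∂(ν u) ≤
      ENNReal.ofReal a ^ (n + 2) * ∫⁻ x, M.Lfun xp x ∂μ := by
    simpa only [List.append_nil, List.length_nil, add_zero] using
      hcon.tsum_lintegral_edist_wordOrbit_le j0 hxp (n + 1) [] μ
  have htriangle : ∀ u, edist (z (List.ofFn u).tail) (z (List.ofFn u)) * ν u Set.univ ≤
      ∫⁻ x, edist x (z (List.ofFn u).tail) ∂(ν u) + ∫⁻ x, edist x (z (List.ofFn u)) ∂(ν u) := by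
    intro u
    rw [← lintegral_const, ← lintegral_add_left measurable_edist_left]
    exact lintegral_mono fun x => edist_triangle_left _ _ _
  have hsum : ∫⁻ σ, edist (M.orbit j0 xp σ n) (M.orbit j0 xp σ (n + 1)) ∂Λ =
      ∑' u, edist (z (List.ofFn u).tail) (z (List.ofFn u)) * ν u Set.univ := by
    have h := hΦ.setLIntegral_comp_pastWord (fun es => edist (z es.tail) (z es)) (n + 2) []
    simp only [List.append_nil, pastCylinder_nil, Measure.restrict_univ, List.length_nil,
      add_zero] at h
    simp only [orbit_eq_wordOrbit]
    exact h
  rw [hsum]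
  refine (ENNReal.tsum_le_tsum htriangle).trans ?_
  rw [ENNReal.tsum_add]
  exact add_le_add htail hword

lemma IsPhiOf.ae_mem_codeDomain [CompleteSpace K] [BorelSpace K]
    (hΦ : M.IsPhiOf μ Λ) (hμ : M.IsInvariantMeasure μ) (hcon : M.IsContractive a) (ha1 : a < 1)
    (j0 : N) (hxp : ∀ j, xp j ∈ M.Kset j) (hb : M.bConst xp ≠ ⊤) :
    ∀ᵐ σ ∂Λ, σ ∈ M.codeDomain j0 xp := by
  have hmeas : ∀ n, Measurable fun σ => edist (M.orbit j0 xp σ n) (M.orbit j0 xp σ (n + 1)) :=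
    fun n => (((M.stronglyMeasurable_orbit j0 xp n).mono pastAlgebra_le).edist
      ((M.stronglyMeasurable_orbit j0 xp (n + 1)).mono pastAlgebra_le)).measurable
  have hL := hcon.lintegral_Lfun_ne_top ha1 hxp hb hμ
  have hgeom : ∀ k, ∑' n : ℕ, ENNReal.ofReal a ^ (n + k) * ∫⁻ x, M.Lfun xp x ∂μ ≠ ⊤ := fun k => by
    simp_rw [ENNReal.tsum_mul_right, pow_add, ENNReal.tsum_mul_right, ENNReal.tsum_geometric]
    exact ENNReal.mul_ne_top (ENNReal.mul_ne_top
      (ENNReal.inv_ne_top.2 (tsub_pos_of_lt (ENNReal.ofReal_lt_one.2 ha1)).ne') (by simp)) hL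
  have hsum : ∫⁻ σ, ∑' n, edist (M.orbit j0 xp σ n) (M.orbit j0 xp σ (n + 1)) ∂Λ ≠ ⊤ := by
    rw [lintegral_tsum fun n => (hmeas n).aemeasurable]
    refine ne_top_of_le_ne_top ?_ (ENNReal.tsum_le_tsum fun n =>
      hΦ.lintegral_edist_orbit_le hμ hcon j0 hxp n)
    rw [ENNReal.tsum_add]
    exact ENNReal.add_ne_top.2 ⟨hgeom 1, hgeom 2⟩
  filter_upwards [hΦ.ae_mem_pathSpace, ae_lt_top (Measurable.tsum hmeas) hsum] with σ hσ hfin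
  exact ⟨hσ, cauchySeq_tendsto_of_complete
    (cauchySeq_of_edist_le_of_tsum_ne_top _ (fun n => le_rfl) hfin.ne)⟩

variable {f : K → ℝ≥0} {C : ℝ≥0}

lemma IsPhiOf.setLIntegral_comp_orbit_le [BorelSpace K] (hΦ : M.IsPhiOf μ Λ)
    (hμ : M.IsInvariantMeasure μ) (hcon : M.IsContractive a) (j0 : N)
    (hxp : ∀ j, xp j ∈ M.Kset j) (hf : LipschitzWith C f) (n : ℕ) (es : List (Option E)) :
    ∫⁻ σ in pastCylinder es, f (M.orbit j0 xp σ (n + es.length)) ∂Λ ≤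
      ∫⁻ x, f x ∂(M.wordMeasure es μ) +
        C * (ENNReal.ofReal a ^ (n + 1 + es.length) * ∫⁻ x, M.Lfun xp x ∂μ) := by
  have hf_meas : Measurable fun x => (f x : ℝ≥0∞) := hf.continuous.measurable.coe_nnreal_ennreal
  simp only [orbit_eq_wordOrbit, Nat.add_right_comm n es.length 1]
  rw [hΦ.setLIntegral_comp_pastWord fun u => f (M.wordOrbit j0 xp u),
    ← hμ.tsum_lintegral_wordMeasure_append (n + 1) es hf_meas]
  refine (ENNReal.tsum_le_tsum fun v =>
    mul_measure_univ_le_lintegral_add_of_lipschitzWith hf _ _).trans ?_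
  rw [ENNReal.tsum_add, ENNReal.tsum_mul_left]
  gcongr
  exact hcon.tsum_lintegral_edist_wordOrbit_le j0 hxp n es μ

lemma IsPhiOf.lintegral_wordMeasure_le [BorelSpace K] (hΦ : M.IsPhiOf μ Λ)
    (hμ : M.IsInvariantMeasure μ) (hcon : M.IsContractive a) (j0 : N)
    (hxp : ∀ j, xp j ∈ M.Kset j) (hf : LipschitzWith C f) (n : ℕ) (es : List (Option E)) :
    ∫⁻ x, f x ∂(M.wordMeasure es μ) ≤
      ∫⁻ σ in pastCylinder es, f (M.orbit j0 xp σ (n + es.length)) ∂Λ +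
        C * (ENNReal.ofReal a ^ (n + 1 + es.length) * ∫⁻ x, M.Lfun xp x ∂μ) := by
  have hf_meas : Measurable fun x => (f x : ℝ≥0∞) := hf.continuous.measurable.coe_nnreal_ennreal
  simp only [orbit_eq_wordOrbit, Nat.add_right_comm n es.length 1]
  rw [hΦ.setLIntegral_comp_pastWord fun u => f (M.wordOrbit j0 xp u),
    ← hμ.tsum_lintegral_wordMeasure_append (n + 1) es hf_meas]
  refine (ENNReal.tsum_le_tsum fun v =>
    lintegral_le_mul_measure_univ_add_of_lipschitzWith hf _
      (M.wordOrbit j0 xp (List.ofFn v ++ es))).trans ?_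
  rw [ENNReal.tsum_add, ENNReal.tsum_mul_left]
  gcongr
  exact hcon.tsum_lintegral_edist_wordOrbit_le j0 hxp n es μ

lemma tendsto_setLIntegral_comp_orbit [BorelSpace K] [IsFiniteMeasure Λ]
    (hD : ∀ᵐ σ ∂Λ, σ ∈ M.codeDomain j0 xp) (hf : Continuous f) (hf_one : ∀ x, f x ≤ 1)
    (A : Set (CodeSpace E)) :
    Tendsto (fun n => ∫⁻ σ in A, f (M.orbit j0 xp σ n) ∂Λ) atTop
      (𝓝 (∫⁻ σ in A, f (M.code j0 xp σ) ∂Λ)) := by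
  refine tendsto_lintegral_of_dominated_convergence (fun _ => 1) (fun n => ?_)
    (fun n => .of_forall fun σ => ENNReal.coe_le_one_iff.2 (hf_one _)) (by simp)
    ((ae_restrict_of_ae hD).mono fun σ hσ => ?_)
  · exact (hf.measurable.comp ((M.stronglyMeasurable_orbit j0 xp n).mono
      pastAlgebra_le).measurable).coe_nnreal_ennreal
  · exact ENNReal.tendsto_coe.2 ((hf.tendsto _).comp (M.tendsto_orbit_code j0 xp hσ))

lemma IsPhiOf.hasCodingLaw [CompleteSpace K] [BorelSpace K] (hΦ : M.IsPhiOf μ Λ)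
    (hμ : M.IsInvariantMeasure μ) (hcon : M.IsContractive a) (ha1 : a < 1) (j0 : N)
    (hxp : ∀ j, xp j ∈ M.Kset j) (hb : M.bConst xp ≠ ⊤) : M.HasCodingLaw j0 xp μ Λ := by
  intro es
  have := hΦ.1
  have : IsFiniteMeasure (M.wordMeasure es μ) := ⟨by
    rw [← hΦ.measure_pastCylinder]
    exact measure_lt_top _ _⟩
  have hD := hΦ.ae_mem_codeDomain hμ hcon ha1 j0 hxp hb
  refine ext_of_forall_lintegral_lipschitzWith_eq fun f C hf hf_one => ?_
  rw [lintegral_map' hf.continuous.measurable.coe_nnreal_ennreal.aemeasurable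
    (M.aemeasurable_code j0 xp hD).restrict]
  have hlim := (tendsto_setLIntegral_comp_orbit hD hf.continuous hf_one
    (pastCylinder es)).comp (tendsto_add_atTop_nat es.length)
  have herror : Tendsto (fun n =>
      C * (ENNReal.ofReal a ^ (n + 1 + es.length) * ∫⁻ x, M.Lfun xp x ∂μ)) atTop (𝓝 0) := by
    have hpow := (ENNReal.tendsto_pow_atTop_nhds_zero_of_lt_one
      (ENNReal.ofReal_lt_one.2 ha1)).comp (tendsto_add_atTop_nat (1 + es.length))
    simpa [← add_assoc, Function.comp_def] using ENNReal.Tendsto.const_mul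
      (ENNReal.Tendsto.mul_const hpow (.inr (hcon.lintegral_Lfun_ne_top ha1 hxp hb hμ)))
      (.inr ENNReal.coe_ne_top)
  refine le_antisymm ?_ ?_
  · simpa using le_of_tendsto_of_tendsto' hlim (tendsto_const_nhds.add herror) fun n =>
      hΦ.setLIntegral_comp_orbit_le hμ hcon j0 hxp hf n es
  · simpa using le_of_tendsto_of_tendsto' tendsto_const_nhds (hlim.add herror) fun n =>
      hΦ.lintegral_wordMeasure_le hμ hcon j0 hxp hf n es

end Phi

section CodingLaw

variable {M : MarkovSystem K N E} {j0 : N} {xp : N → K} {μ : Measure K} {Λ : Measure (CodeSpace E)}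

lemma HasCodingLaw.measure_pastCylinder (h : M.HasCodingLaw j0 xp μ Λ)
    (hF : AEMeasurable (M.code j0 xp) Λ) (es : List (Option E)) :
    Λ (pastCylinder es) = M.wordMeasure es μ Set.univ := by
  rw [← h es, Measure.map_apply_of_aemeasurable hF.restrict .univ, Set.preimage_univ,
    Measure.restrict_apply_univ]

lemma HasCodingLaw.isPhiOf [IsProbabilityMeasure Λ] (h : M.HasCodingLaw j0 xp μ Λ)
    (hF : AEMeasurable (M.code j0 xp) Λ) (hΛ : Measure.map (shiftMap E) Λ = Λ) :
    M.IsPhiOf μ Λ :=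
  ⟨inferInstance, hΛ, fun m _ es => by
    rw [measure_cylSetL_eq_measure_pastCylinder hΛ, h.measure_pastCylinder hF, wordMeasure_univ]⟩

lemma HasCodingLaw.map_code_eq (h : M.HasCodingLaw j0 xp μ Λ) :
    Measure.map (M.code j0 xp) Λ = μ := by
  simpa using h []

lemma HasCodingLaw.isInvariantMeasure [Countable E] [IsProbabilityMeasure Λ]
    (h : M.HasCodingLaw j0 xp μ Λ) (hF : AEMeasurable (M.code j0 xp) Λ) :
    M.IsInvariantMeasure μ := by
  refine ⟨h.map_code_eq ▸ Measure.isProbabilityMeasure_map hF,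
    Measure.ext_of_lintegral _ fun f hf => ?_⟩
  calc ∫⁻ x, f x ∂(M.adjOp μ)
      = ∑' o, ∫⁻ x, f x ∂(M.wordMeasure [o] μ) := by
        rw [adjOp_eq_sum_wordMeasure, lintegral_sum_measure]
    _ = ∑' o, ∫⁻ σ in pastCylinder [o], f (M.code j0 xp σ) ∂Λ :=
        tsum_congr fun o => by rw [← h [o], lintegral_map' hf.aemeasurable hF.restrict]
    _ = ∫⁻ σ, f (M.code j0 xp σ) ∂Λ := by
        rw [tsum_setLIntegral_pastCylinder_cons, pastCylinder_nil, setLIntegral_univ]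
    _ = ∫⁻ x, f x ∂μ := by rw [← lintegral_map' hf.aemeasurable hF, h.map_code_eq]

lemma HasCodingLaw.measure_pastCylinder_inter_eq (h : M.HasCodingLaw j0 xp μ Λ)
    (hF : AEMeasurable (M.code j0 xp) Λ) (hΛ : Measure.map (shiftMap E) Λ = Λ)
    (es : List (Option E)) (e : E) :
    Λ (pastCylinder es ∩ {σ | σ 1 = some e}) =
      ∫⁻ σ in pastCylinder es, ENNReal.ofReal (M.p e (M.code j0 xp σ)) ∂Λ := by
  have hp : Measurable fun x => ENNReal.ofReal (M.p e x) := (M.p_measurable e).ennreal_ofReal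
  calc Λ (pastCylinder es ∩ {σ | σ 1 = some e})
      = Λ (pastCylinder (es ++ [some e])) := by
        rw [← Measure.restrict_apply_univ (pastCylinder (es ++ _)),
          restrict_pastCylinder_append_singleton hΛ, Measure.map_apply measurable_shiftMap .univ,
          Set.preimage_univ, Measure.restrict_apply_univ]
    _ = M.wordMeasure [some e] (M.wordMeasure es μ) Set.univ := by
        rw [h.measure_pastCylinder hF, wordMeasure_append]
    _ = ∫⁻ x, ENNReal.ofReal (M.p e x) ∂(M.wordMeasure es μ) := by
        rw [wordMeasure_singleton_some, Measure.map_apply (M.w_measurable e) .univ,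
          Set.preimage_univ, withDensity_apply _ .univ, Measure.restrict_univ]
    _ = ∫⁻ σ in pastCylinder es, ENNReal.ofReal (M.p e (M.code j0 xp σ)) ∂Λ := by
        rw [← h es, lintegral_map' hp.aemeasurable hF.restrict]

variable [CompleteSpace K] [BorelSpace K] [Countable E]

lemma aestronglyMeasurable_p_comp_code (hD : ∀ᵐ σ ∂Λ, σ ∈ M.codeDomain j0 xp) (e : E) :
    AEStronglyMeasurable[pastAlgebra E] (fun σ => M.p e (M.code j0 xp σ)) Λ := by
  obtain ⟨F, hF, hFD⟩ := M.exists_measurable_eqOn_code j0 xp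
  exact ⟨fun σ => M.p e (F σ), ((M.p_measurable e).comp hF).stronglyMeasurable,
    hD.mono fun σ hσ => congrArg (M.p e) (hFD hσ).symm⟩

lemma condExp_ae_eq_p_comp_code_iff [IsFiniteMeasure Λ] (hD : ∀ᵐ σ ∂Λ, σ ∈ M.codeDomain j0 xp)
    (e : E) :
    Λ[{σ : CodeSpace E | σ 1 = some e}.indicator fun _ => (1 : ℝ)|pastAlgebra E]
        =ᵐ[Λ] (fun σ => M.p e (M.code j0 xp σ)) ↔
      ∀ A, MeasurableSet[pastAlgebra E] A →
        Λ (A ∩ {σ | σ 1 = some e}) = ∫⁻ σ in A, ENNReal.ofReal (M.p e (M.code j0 xp σ)) ∂Λ :=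
  condExp_indicator_one_ae_eq_iff pastAlgebra_le (measurableSet_coord_eq 1 (some e))
    (aestronglyMeasurable_p_comp_code hD e) fun _ => M.p_nonneg e _

lemma HasCodingLaw.isEquilibrium [IsProbabilityMeasure Λ] (h : M.HasCodingLaw j0 xp μ Λ)
    (hΛ : Measure.map (shiftMap E) Λ = Λ) (hD : ∀ᵐ σ ∂Λ, σ ∈ M.codeDomain j0 xp) :
    M.IsEquilibrium j0 xp Λ := by
  refine ⟨inferInstance, hΛ, (mem_ae_iff_prob_eq_one (M.measurableSet_codeDomain j0 xp)).1 hD,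
    fun e => (condExp_ae_eq_p_comp_code_iff hD e).2 fun A hA => ?_⟩
  have hcylinder : ∀ es, (Λ.restrict {σ | σ 1 = some e}) (pastCylinder es) =
      (Λ.withDensity fun σ => ENNReal.ofReal (M.p e (M.code j0 xp σ))) (pastCylinder es) := by
    intro es
    have hes := pastAlgebra_le _ (measurableSet_pastCylinder es)
    rw [Measure.restrict_apply hes, withDensity_apply _ hes,
      h.measure_pastCylinder_inter_eq (M.aemeasurable_code j0 xp hD) hΛ]
  have hpast := ext_on_measurableSpace_of_generate_finite _ _ (Set.forall_mem_range.2 hcylinder)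
    pastAlgebra_le pastAlgebra_eq_generateFrom_range isPiSystem_range_pastCylinder
    (pastCylinder_nil (E := E) ▸ hcylinder []) hA
  rwa [Measure.restrict_apply (pastAlgebra_le _ hA), withDensity_apply _ (pastAlgebra_le _ hA)]
    at hpast

end CodingLaw

section Equilibrium

variable {M : MarkovSystem K N E} {j0 : N} {xp : N → K} {Λ : Measure (CodeSpace E)}

variable [CompleteSpace K] [BorelSpace K] [Countable E]

lemma IsEquilibrium.ae_mem_codeDomain (h : M.IsEquilibrium j0 xp Λ) :
    ∀ᵐ σ ∂Λ, σ ∈ M.codeDomain j0 xp :=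
  have := h.1
  (mem_ae_iff_prob_eq_one (M.measurableSet_codeDomain j0 xp)).2 h.2.2.1

lemma IsEquilibrium.measure_inter_eq (h : M.IsEquilibrium j0 xp Λ) (e : E) {A : Set (CodeSpace E)}
    (hA : MeasurableSet[pastAlgebra E] A) :
    Λ (A ∩ {σ | σ 1 = some e}) = ∫⁻ σ in A, ENNReal.ofReal (M.p e (M.code j0 xp σ)) ∂Λ :=
  have := h.1
  (condExp_ae_eq_p_comp_code_iff h.ae_mem_codeDomain e).1 (h.2.2.2 e) A hA

lemma IsEquilibrium.ae_code_mem_Kset (h : M.IsEquilibrium j0 xp Λ) :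
    ∀ᵐ σ ∂Λ, ∀ e, σ 1 = some e → M.code j0 xp σ ∈ M.Kset (M.i e) := by
  refine ae_all_iff.2 fun e => ?_
  obtain ⟨F, hF, hFD⟩ := M.exists_measurable_eqOn_code j0 xp
  have hA : MeasurableSet[pastAlgebra E] (F ⁻¹' (M.Kset (M.i e))ᶜ) :=
    hF (M.Kset_measurable _).compl
  have hzero : Λ (F ⁻¹' (M.Kset (M.i e))ᶜ ∩ {σ | σ 1 = some e}) = 0 := by
    rw [h.measure_inter_eq e hA, setLIntegral_congr_fun_ae (g := fun _ => 0) (pastAlgebra_le _ hA),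
      lintegral_zero]
    filter_upwards [h.ae_mem_codeDomain] with σ hσ hσA
    rw [← hFD hσ, M.p_zero_outside e _ hσA, ENNReal.ofReal_zero]
  filter_upwards [measure_eq_zero_iff_ae_notMem.1 hzero, h.ae_mem_codeDomain] with σ hσ hσD he
  rw [← hFD hσD]
  exact not_not.1 fun hmem => hσ ⟨hmem, he⟩

lemma IsEquilibrium.map_restrict_inter_eq (h : M.IsEquilibrium j0 xp Λ) (e : E)
    {A : Set (CodeSpace E)} (hA : MeasurableSet[pastAlgebra E] A) :
    (Λ.restrict (A ∩ {σ | σ 1 = some e})).map (M.code j0 xp) =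
      ((Λ.restrict A).map (M.code j0 xp)).withDensity fun x => ENNReal.ofReal (M.p e x) := by
  obtain ⟨F, hF, hFD⟩ := M.exists_measurable_eqOn_code j0 xp
  have hcode : M.code j0 xp =ᵐ[Λ] F := h.ae_mem_codeDomain.mono fun σ hσ => (hFD hσ).symm
  have hae (B : Set (CodeSpace E)) : M.code j0 xp =ᵐ[Λ.restrict B] F := ae_restrict_of_ae hcode
  rw [Measure.map_congr (hae _), Measure.map_congr (hae _)]
  refine map_restrict_inter_eq_withDensity pastAlgebra_le hF (M.p_measurable e).ennreal_ofReal
    (fun A hA => ?_) hA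
  rw [h.measure_inter_eq e hA]
  exact lintegral_congr_ae ((hae A).mono fun σ hσ => by simp only [hσ])

lemma IsEquilibrium.hasCodingLaw (h : M.IsEquilibrium j0 xp Λ) (hxp : ∀ j, xp j ∈ M.Kset j)
    (hw : ∀ e, ContinuousOn (M.w e) (M.Kset (M.i e))) :
    M.HasCodingLaw j0 xp (Λ.map (M.code j0 xp)) Λ := by
  intro es
  induction es using List.reverseRecOn with
  | nil => simp
  | append_singleton es o ih =>
    have hshift := restrict_pastCylinder_append_singleton h.2.1 es o
    rw [wordMeasure_append, ← ih]
    cases o with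
    | none =>
      have hnull : Λ (pastCylinder es ∩ {σ | σ 1 = none}) = 0 := by
        refine measure_eq_zero_iff_ae_notMem.2 (h.ae_mem_codeDomain.mono fun σ hσ hnone => ?_)
        obtain ⟨-, e, -, he, -⟩ := hσ.1 0
        exact Option.some_ne_none e (he.symm.trans hnone.2)
      rw [hshift, Measure.restrict_eq_zero.2 hnull, Measure.map_zero, Measure.map_zero,
        wordMeasure_singleton_none]
    | some e =>
      have hF := M.aemeasurable_code j0 xp h.ae_mem_codeDomain
      have hcode : M.code j0 xp ∘ shiftMap E
          =ᵐ[Λ.restrict (pastCylinder es ∩ {σ | σ 1 = some e})] M.w e ∘ M.code j0 xp := by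
        filter_upwards [ae_restrict_of_ae h.ae_mem_codeDomain, ae_restrict_of_ae h.ae_code_mem_Kset,
          ae_restrict_mem ((pastAlgebra_le _ (measurableSet_pastCylinder es)).inter
            (measurableSet_coord_eq 1 (some e)))] with σ hσ hK hmem
        exact M.code_shiftMap j0 hxp hσ hmem.2 (hK e hmem.2) (hw e)
      rw [hshift, AEMeasurable.map_map_of_aemeasurable (hshift ▸ hF.restrict)
        measurable_shiftMap.aemeasurable, Measure.map_congr hcode,
        ← AEMeasurable.map_map_of_aemeasurable (M.w_measurable e).aemeasurable hF.restrict,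
        h.map_restrict_inter_eq e (measurableSet_pastCylinder es), wordMeasure_singleton_some]

lemma IsEquilibrium.isAsymptotic (h : M.IsEquilibrium j0 xp Λ) {pbar : E → K → ℝ}
    (hpbar : ∀ e, Set.EqOn (pbar e) (M.p e) (M.Kset (M.i e))) :
    M.IsAsymptotic j0 xp pbar Λ := by
  refine ⟨h.1, h.2.1, h.2.2.1, fun e => (h.2.2.2 e).trans ?_⟩
  filter_upwards [h.ae_mem_codeDomain, h.ae_code_mem_Kset] with σ hσ hK
  obtain ⟨e₀, e₁, h0, h1, h01⟩ := hσ.1 0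
  have hmem := hK e₁ h1
  by_cases hT : σ ∈ M.Tset (M.i e)
  · obtain ⟨-, e₀', h0', ht⟩ := id hT
    obtain rfl : e₀ = e₀' := Option.some_injective _ (h0.symm.trans h0')
    rw [Set.indicator_of_mem hT, hpbar e (ht ▸ h01 ▸ hmem)]
  · rw [Set.indicator_of_notMem hT]
    refine M.p_zero_outside e _ fun hmem' => hT ⟨hσ.1, e₀, h0, ?_⟩
    exact h01.symm.trans (M.eq_of_mem_Kset hmem hmem')

end Equilibrium

end MarkovSystem

theorem equilibrium_subset_phi_subset_asymptotic_general {K : Type*} [MetricSpace K]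
    [CompleteSpace K] [MeasurableSpace K] [BorelSpace K] {N E : Type*} [Countable E]
    (M : MarkovSystem K N E) (j0 : N) (xp : N → K) (hxp : ∀ j, xp j ∈ M.Kset j)
    (a : ℝ) (ha1 : a < 1) (hcon : M.IsContractive a)
    (hw : ∀ e, ContinuousOn (M.w e) (M.Kset (M.i e))) (hb : M.bConst xp ≠ ⊤)
    (pbar : E → K → ℝ) (hpbar : M.IsUCExtensionP pbar) :
    (∀ Λ : Measure (CodeSpace E), M.IsEquilibrium j0 xp Λ ↔
      ∃ μ : Measure K, M.IsInvariantMeasure μ ∧ M.IsPhiOf μ Λ) ∧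
    (∀ Λ : Measure (CodeSpace E), M.IsEquilibrium j0 xp Λ → M.IsAsymptotic j0 xp pbar Λ) ∧
    (∀ (μ : Measure K) (Λ : Measure (CodeSpace E)),
      M.IsInvariantMeasure μ → M.IsPhiOf μ Λ → Measure.map (M.code j0 xp) Λ = μ) := by
  refine ⟨fun Λ => ⟨fun h => ?_, fun ⟨μ, hμ, hΦ⟩ => ?_⟩,
    fun Λ h => h.isAsymptotic fun e => (hpbar e).2.1,
    fun μ Λ hμ hΦ => (hΦ.hasCodingLaw hμ hcon ha1 j0 hxp hb).map_code_eq⟩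
  · have := h.1
    have hF := M.aemeasurable_code j0 xp h.ae_mem_codeDomain
    have hlaw := h.hasCodingLaw hxp hw
    exact ⟨_, hlaw.isInvariantMeasure hF, hlaw.isPhiOf hF h.2.1⟩
  · have := hΦ.1
    exact (hΦ.hasCodingLaw hμ hcon ha1 j0 hxp hb).isEquilibrium hΦ.2.1
      (hΦ.ae_mem_codeDomain hμ hcon ha1 j0 hxp hb)

/-- If `M` is contractive with rate `0 < a < 1` and uniformly continuous
with `b < ∞`, then `E(M) ⊆ Φ(P(M)) ⊆ Ẽ(M)`, and `F(Φ(μ)) = μ` for every `μ ∈ P(M)`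
(where `Λ = Φ(μ)` is expressed by the defining cylinder property `IsPhiOf`). -/
theorem equilibrium_subset_phi_subset_asymptotic
    (M : MarkovSystem K N E) (j0 : N) (xp : N → K) (hxp : ∀ j, xp j ∈ M.Kset j)
    (a : ℝ) (ha0 : 0 < a) (ha1 : a < 1) (hcon : M.IsContractive a)
    (huc : M.IsUniformlyContinuous) (hb : M.bConst xp ≠ ⊤)
    (pbar : E → K → ℝ) (hpbar : M.IsUCExtensionP pbar) :
    (∀ Λ : Measure (CodeSpace E), M.IsEquilibrium j0 xp Λ →
      ∃ μ : Measure K, M.IsInvariantMeasure μ ∧ M.IsPhiOf μ Λ) ∧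
    (∀ (μ : Measure K) (Λ : Measure (CodeSpace E)),
      M.IsInvariantMeasure μ → M.IsPhiOf μ Λ → M.IsAsymptotic j0 xp pbar Λ) ∧
    (∀ (μ : Measure K) (Λ : Measure (CodeSpace E)),
      M.IsInvariantMeasure μ → M.IsPhiOf μ Λ → Measure.map (M.code j0 xp) Λ = μ) := by
  obtain ⟨hiff, hasymptotic, hmap⟩ := equilibrium_subset_phi_subset_asymptotic_general M j0 xp hxp a
    ha1 hcon (fun e => (huc e).1.continuousOn) hb pbar hpbar
  exact ⟨fun Λ => (hiff Λ).1,
    fun μ Λ hμ hΦ => hasymptotic Λ ((hiff Λ).2 ⟨μ, hμ, hΦ⟩), hmap⟩
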